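/- arXiv:2208.14540 — 4 statements merged into one kernel-verified Lean document; each statement's English description precedes it below -/
import Mathlib

section
/- Let (δ_{ij}) be an n×n symmetric matrix with zero diagonal and nonnegative entries, and fix d_e ≥ 1. Set A = (−½ δ_{ij}²) and B = H A H where H = I − (1/n) J is the centering matrix (J the all-ones matrix). Let ν₁ ≥ … ≥ νₙ be the eigenvalues of B; a classical-scaling (CS) embedding from (δ_{ij}) is any family p₁,…,pₙ ∈ ℝ^{d_e} with pᵢ = (√(ν₁⁺) u_{i,1},…,√(ν_{d_e}⁺) u_{i,d_e}) for a choice of orthonormal eigenvectors u₁,…,u_{d_e} of B for ν₁,…,ν_{d_e} (here a⁺ = max(a,0)). Assume ν_{d_e} ≥ 0. Then there exists C > 0, depending only on (δ_{ij}) and d_e, such that for every symmetric nonnegative matrix (δ̂_{ij}) with zero diagonal, with Â, B̂, and CS embedding (p̂ᵢ) defined analogously from (δ̂_{ij}), there exists a CS embedding (pᵢ) from (δ_{ij}) with: Σᵢ ‖pᵢ − p̂ᵢ‖² ≤ C n² ‖A − Â‖_F² if ν_{d_e} > 0, and Σᵢ ‖pᵢ − p̂ᵢ‖² ≤ C n²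 ‖A − Â‖_F if ν_{d_e} = 0, where ‖·‖_F is the Frobenius norm. -/
open Matrix
open scoped BigOperators

noncomputable section

namespace Stmt3

/-- `A = (−½ δᵢⱼ²)`. -/
def Amat {n : ℕ} (δ : Matrix (Fin n) (Fin n) ℝ) : Matrix (Fin n) (Fin n) ℝ :=
  Matrix.of fun i j => -(1 / 2 : ℝ) * δ i j ^ 2

/-- The centering matrix `H = I − J/n`. -/
def Hmat (n : ℕ) : Matrix (Fin n) (Fin n) ℝ :=
  1 - (n : ℝ)⁻¹ • Matrix.of fun _ _ => (1 : ℝ)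

/-- `B = H A H`. -/
def Bmat {n : ℕ} (δ : Matrix (Fin n) (Fin n) ℝ) : Matrix (Fin n) (Fin n) ℝ :=
  Hmat n * Amat δ * Hmat n

/-- The Frobenius norm. -/
def frob {n : ℕ} (M : Matrix (Fin n) (Fin n) ℝ) : ℝ :=
  Real.sqrt (∑ i, ∑ j, M i j ^ 2)

/-- `(ν, u)` is a full orthonormal eigendecomposition of `B = Bmat δ`, with eigenvalues
listed in decreasing order. -/
def IsEigenDecomp {n : ℕ} (δ : Matrix (Fin n) (Fin n) ℝ)
    (ν : Fin n → ℝ) (u : Fin n → Fin n → ℝ) : Prop :=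
  Antitone ν ∧ (∀ k l, ∑ i, u k i * u l i = if k = l then (1 : ℝ) else 0) ∧
    ∀ k, (Bmat δ).mulVec (u k) = ν k • u k

/-- `p` is a classical-scaling embedding of the dissimilarity matrix `δ` in dimension `de`:
`pᵢ = (√(ν₁⁺) u_{i,1}, …, √(ν_{de}⁺) u_{i,de})` for some orthonormal eigendecomposition
`(ν, u)` of `B` with decreasing eigenvalues. -/
def IsCSEmbedding {n : ℕ} (de : ℕ) (hden : de ≤ n) (δ : Matrix (Fin n) (Fin n) ℝ)
    (p : Fin n → EuclideanSpace ℝ (Fin de)) : Prop :=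
  ∃ (ν : Fin n → ℝ) (u : Fin n → Fin n → ℝ), IsEigenDecomp δ ν u ∧
    ∀ i k, p i k = Real.sqrt (max (ν (Fin.castLE hden k)) 0) * u (Fin.castLE hden k) i

/-!
Write `B = Bmat δ` and `B̂ = Bmat δ̂`. Since `‖B - B̂‖ ≤ ‖H‖² ‖A - Â‖ ≤ n ‖A - Â‖`, it suffices to
perturb `B`. By the Hoffman–Wielandt inequality the sorted eigenvalues move by at most `‖B - B̂‖`.
Let `U` and `V` be orthonormal eigenbases of `B` and `B̂`, and let `c = Uᴴ V` be the matrix of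
overlaps. The entries of `Uᴴ (B - B̂) V` are `(νᵢ - ν̂ⱼ) cᵢⱼ`, so when `‖B - B̂‖` is small against
the least gap between distinct eigenvalues of `B`, the overlaps between different eigenspaces are
`O(‖B - B̂‖)`: the unitary `c` is close to its block-diagonal part, hence to the unitary polar
factor `Q` of that part. As `Q` preserves the eigenspaces of `B`, the columns of `W = U Q` are again
eigenvectors of `B`, and `‖W - V‖ = ‖Q - c‖ = O(‖B - B̂‖)`. The two exponents come from
`a ↦ √(a⁺)`, which is Lipschitz near a positive number but only `1/2`-Hölder at `0`.
-/

section DoublyStochastic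

variable {ι R : Type*} [Fintype ι] [DecidableEq ι] [Field R] [LinearOrder R] [IsStrictOrderedRing R]
  {M : Matrix ι ι R} {a b : ι → R}

lemma dotProduct_mulVec_le_of_mem_doublyStochastic (hM : M ∈ doublyStochastic R ι)
    (hab : Monovary a b) : a ⬝ᵥ M *ᵥ b ≤ a ⬝ᵥ b := by
  obtain ⟨w, hw_nonneg, hw_sum, rfl⟩ := exists_eq_sum_perm_of_mem_doublyStochastic hM
  calc a ⬝ᵥ (∑ σ, w σ • σ.permMatrix R) *ᵥ b
      = ∑ σ, w σ * ∑ i, a i * b (σ i) := by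
        simp only [Matrix.sum_mulVec, smul_mulVec, permMatrix_mulVec, dotProduct_sum,
          dotProduct_smul, smul_eq_mul]
        rfl
    _ ≤ ∑ σ, w σ * a ⬝ᵥ b := by
        gcongr with σ
        exacts [hw_nonneg σ, hab.sum_mul_comp_perm_le_sum_mul]
    _ = a ⬝ᵥ b := by rw [← Finset.sum_mul, hw_sum, one_mul]

lemma sum_sub_sq_le_of_mem_doublyStochastic (hM : M ∈ doublyStochastic R ι)
    (hab : Monovary a b) :
    ∑ i, (a i - b i) ^ 2 ≤ ∑ i, ∑ j, M i j * (a i - b j) ^ 2 := by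
  have hrow : ∑ i, ∑ j, M i j * a i ^ 2 = ∑ i, a i ^ 2 := by
    simp only [← Finset.sum_mul, sum_row_of_mem_doublyStochastic hM, one_mul]
  have hcol : ∑ i, ∑ j, M i j * b j ^ 2 = ∑ j, b j ^ 2 := by
    rw [Finset.sum_comm]
    simp only [← Finset.sum_mul, sum_col_of_mem_doublyStochastic hM, one_mul]
  calc ∑ i, (a i - b i) ^ 2 = ∑ i, a i ^ 2 + ∑ i, b i ^ 2 - 2 * a ⬝ᵥ b := by
        simp only [dotProduct, Finset.mul_sum, ← Finset.sum_add_distrib, ← Finset.sum_sub_distrib]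
        exact Finset.sum_congr rfl fun i _ => by ring
    _ ≤ ∑ i, a i ^ 2 + ∑ i, b i ^ 2 - 2 * a ⬝ᵥ M *ᵥ b := by
        gcongr
        exact dotProduct_mulVec_le_of_mem_doublyStochastic hM hab
    _ = ∑ i, ∑ j, M i j * (a i - b j) ^ 2 := by
        rw [← hrow, ← hcol]
        simp only [dotProduct, mulVec, Finset.mul_sum, ← Finset.sum_add_distrib,
          ← Finset.sum_sub_distrib]
        exact Finset.sum_congr rfl fun i _ => Finset.sum_congr rfl fun j _ => by ring

end DoublyStochastic

open scoped ComplexOrder MatrixOrder in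
lemma exists_posSemidef_mul_self_eq {ι 𝕜 : Type*} [Fintype ι] [RCLike 𝕜]
    {S : Matrix ι ι 𝕜} (hS : S.PosSemidef) :
    ∃ P : Matrix ι ι 𝕜, P.PosSemidef ∧ P * P = S ∧ ∀ X, Commute S X → Commute P X := by
  classical
  exact ⟨CFC.sqrt S, (CFC.sqrt_nonneg S).posSemidef, CFC.sqrt_mul_sqrt_self S hS.nonneg,
    fun _ hX => hX.cfcₙ_nnreal _⟩

section Frobenius

open scoped ComplexOrder Matrix.Norms.Frobenius

variable {l m n κ 𝕜 : Type*} [Fintype l] [Fintype m] [Fintype n] [Fintype κ] [RCLike 𝕜]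

lemma frobenius_norm_sq (M : Matrix m n 𝕜) : ‖M‖ ^ 2 = ∑ i, ∑ j, ‖M i j‖ ^ 2 := by
  simp only [frobenius_norm_def, Real.rpow_ofNat, ← Real.sqrt_eq_rpow]
  exact Real.sq_sqrt (by positivity)

lemma frobenius_norm_sq_eq_re_trace (M : Matrix m n 𝕜) :
    ‖M‖ ^ 2 = RCLike.re (trace (M * Mᴴ)) := by
  simp only [frobenius_norm_sq, trace, diag_apply, mul_apply, conjTranspose_apply, map_sum,
    RCLike.star_def, RCLike.mul_conj, ← RCLike.ofReal_pow, RCLike.ofReal_re]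

lemma frobenius_norm_mul_right_of_mul_conjTranspose [DecidableEq m] {V : Matrix m n 𝕜}
    (hV : V * Vᴴ = 1) (M : Matrix l m 𝕜) : ‖M * V‖ = ‖M‖ := by
  refine (pow_left_inj₀ (norm_nonneg _) (norm_nonneg _) two_ne_zero).mp ?_
  rw [frobenius_norm_sq_eq_re_trace, frobenius_norm_sq_eq_re_trace, conjTranspose_mul,
    Matrix.mul_assoc, ← Matrix.mul_assoc V, hV, Matrix.one_mul]

lemma frobenius_norm_mul_left_of_conjTranspose_mul [DecidableEq n] {V : Matrix m n 𝕜}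
    (hV : Vᴴ * V = 1) (M : Matrix n l 𝕜) : ‖V * M‖ = ‖M‖ := by
  rw [← frobenius_norm_conjTranspose, conjTranspose_mul,
    frobenius_norm_mul_right_of_mul_conjTranspose (by rwa [conjTranspose_conjTranspose]),
    frobenius_norm_conjTranspose]

lemma frobenius_norm_submatrix_id_le (M : Matrix m n 𝕜) {f : κ → n} (hf : f.Injective) :
    ‖M.submatrix id f‖ ≤ ‖M‖ := by
  refine (pow_le_pow_iff_left₀ (norm_nonneg _) (norm_nonneg _) two_ne_zero).mp ?_
  simp only [frobenius_norm_sq, submatrix_apply, id]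
  gcongr with i
  exact (Finset.sum_map Finset.univ ⟨f, hf⟩ fun j => ‖M i j‖ ^ 2).symm.le.trans
    (Finset.sum_le_univ_sum_of_nonneg fun j => by positivity)

lemma frobenius_norm_le_norm_mul_one_add [DecidableEq n] {P : Matrix n n 𝕜} (hP : P.PosSemidef)
    (M : Matrix m n 𝕜) : ‖M‖ ≤ ‖M * (1 + P)‖ := by
  refine (pow_le_pow_iff_left₀ (norm_nonneg _) (norm_nonneg _) two_ne_zero).mp ?_
  have hcross : 0 ≤ RCLike.re (trace (M * P * Mᴴ)) :=
    (RCLike.nonneg_iff.mp (hP.mul_mul_conjTranspose_same M).trace_nonneg).1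
  have hsquare : 0 ≤ RCLike.re (trace (M * P * (M * P)ᴴ)) := by
    rw [← frobenius_norm_sq_eq_re_trace]
    positivity
  have hexpand : M * (1 + P) * (M * (1 + P))ᴴ
      = M * Mᴴ + M * P * Mᴴ + M * P * Mᴴ + M * P * (M * P)ᴴ := by
    simp only [conjTranspose_mul, conjTranspose_add, conjTranspose_one, hP.isHermitian.eq]
    simp only [Matrix.mul_add, Matrix.add_mul, Matrix.mul_one, Matrix.one_mul, Matrix.mul_assoc]
    abel
  rw [frobenius_norm_sq_eq_re_trace, frobenius_norm_sq_eq_re_trace, hexpand]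
  simp only [trace_add, map_add]
  linarith

lemma exists_unitary_polar_factor [DecidableEq n] {D : Matrix n n 𝕜} (hD : ‖1 - D * Dᴴ‖ < 1) :
    ∃ Q ∈ unitaryGroup n 𝕜, (∀ X, Commute D X → Commute Dᴴ X → Commute Q X) ∧
      ‖Q - D‖ ≤ ‖1 - D * Dᴴ‖ := by
  obtain ⟨P, hP, hPP, hPcomm⟩ := exists_posSemidef_mul_self_eq (posSemidef_self_mul_conjTranspose D)
  have hPP_unit : IsUnit (P * P) := by
    rw [hPP, ← sub_sub_cancel 1 (D * Dᴴ)]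
    exact isUnit_one_sub_of_norm_lt_one hD
  obtain ⟨P, rfl⟩ := isUnit_of_mul_isUnit_left hPP_unit
  obtain ⟨Q, rfl⟩ : ∃ Q, P.val * Q = D := ⟨P⁻¹.val * D, P.mul_inv_cancel_left D⟩
  have hQ : Q * Qᴴ = 1 := by
    refine P.mul_left_inj.mp (P.mul_right_inj.mp ?_)
    calc P.val * (Q * Qᴴ * P.val) = P.val * Q * (P.val * Q)ᴴ := by
          simp only [conjTranspose_mul, hP.isHermitian.eq, mul_assoc]
      _ = P.val * (1 * P.val) := by rw [← hPP, one_mul]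
  refine ⟨Q, mem_unitaryGroup_iff.mpr hQ, fun X hX hX' => ?_, ?_⟩
  · simpa only [Units.inv_mul_cancel_left] using
      (hPcomm X (hX.mul_left hX')).units_inv_left.mul_left hX
  · calc ‖Q - P.val * Q‖ = ‖(1 - P.val) * Q‖ := by rw [sub_mul, one_mul]
      _ = ‖1 - P.val‖ := frobenius_norm_mul_right_of_mul_conjTranspose hQ _
      _ ≤ ‖(1 - P.val) * (1 + P.val)‖ := frobenius_norm_le_norm_mul_one_add hP _
      _ = ‖1 - P.val * Q * (P.val * Q)ᴴ‖ := by rw [← hPP]; congr 1; noncomm_ring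

end Frobenius

section UnitaryGroup

open scoped Matrix.Norms.Frobenius

variable {ι κ 𝕜 : Type*} [Fintype ι] [DecidableEq ι] [RCLike 𝕜] {U V : Matrix ι ι 𝕜}

lemma conjTranspose_mul_mem_unitaryGroup (hU : U ∈ unitaryGroup ι 𝕜)
    (hV : V ∈ unitaryGroup ι 𝕜) : Uᴴ * V ∈ unitaryGroup ι 𝕜 :=
  mul_mem (Unitary.star_mem hU) hV

lemma conjTranspose_submatrix_mul_submatrix_of_mem_unitaryGroup [DecidableEq κ]
    (hU : U ∈ unitaryGroup ι 𝕜) {f : κ → ι} (hf : f.Injective) :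
    (U.submatrix id f)ᴴ * U.submatrix id f = 1 := by
  rw [conjTranspose_submatrix, ← submatrix_mul _ _ f id f Function.bijective_id,
    ← star_eq_conjTranspose, mem_unitaryGroup_iff'.mp hU, submatrix_one f hf]

lemma frobenius_norm_of_mem_unitaryGroup (hU : U ∈ unitaryGroup ι 𝕜) :
    ‖U‖ = ‖(1 : Matrix ι ι 𝕜)‖ := by
  rw [← Matrix.one_mul U,
    frobenius_norm_mul_right_of_mul_conjTranspose (mem_unitaryGroup_iff.mp hU)]

lemma frobenius_norm_sub_le_of_mem_unitaryGroup (hU : U ∈ unitaryGroup ι 𝕜)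
    (hV : V ∈ unitaryGroup ι 𝕜) : ‖U - V‖ ≤ 2 * ‖(1 : Matrix ι ι 𝕜)‖ := calc
  ‖U - V‖ ≤ ‖U‖ + ‖V‖ := norm_sub_le U V
  _ = 2 * ‖(1 : Matrix ι ι 𝕜)‖ := by
    rw [frobenius_norm_of_mem_unitaryGroup hU, frobenius_norm_of_mem_unitaryGroup hV, two_mul]

lemma normSq_mem_doublyStochastic_of_mem_unitaryGroup (hU : U ∈ unitaryGroup ι 𝕜) :
    (of fun i j => ‖U i j‖ ^ 2) ∈ doublyStochastic ℝ ι := by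
  have hrow {V : Matrix ι ι 𝕜} (hV : V * Vᴴ = 1) (i : ι) : ∑ j, ‖V i j‖ ^ 2 = 1 := by
    have h := congr_fun₂ hV i i
    simp only [mul_apply, conjTranspose_apply, RCLike.star_def, RCLike.mul_conj, one_apply_eq] at h
    exact_mod_cast h
  refine mem_doublyStochastic_iff_sum.mpr
    ⟨fun i j => sq_nonneg _, hrow (mem_unitaryGroup_iff.mp hU), fun j => ?_⟩
  simpa only [of_apply, conjTranspose_apply, norm_star] using hrow (V := Uᴴ)
    (by rw [conjTranspose_conjTranspose]; exact mem_unitaryGroup_iff'.mp hU) j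

end UnitaryGroup

section Pinching

open scoped Matrix.Norms.Frobenius

variable {ι α 𝕜 : Type*} [DecidableEq α]

/-- The pinching of `M` along `ν`: the block-diagonal part of `M` for the partition of the indices
into the fibres of `ν`, i.e. the projection of `M` onto the commutant of `diagonal ν`. -/
def pinching [Zero 𝕜] (ν : ι → α) (M : Matrix ι ι 𝕜) : Matrix ι ι 𝕜 :=
  of fun i j => if ν i = ν j then M i j else 0

lemma conjTranspose_pinching [AddMonoid 𝕜] [StarAddMonoid 𝕜] (ν : ι → α) (M : Matrix ι ι 𝕜) :
    (pinching ν M)ᴴ = pinching ν Mᴴ := by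
  ext i j
  simp only [pinching, conjTranspose_apply, of_apply, apply_ite star, star_zero, eq_comm]

lemma pinching_one [DecidableEq ι] [Zero 𝕜] [One 𝕜] (ν : ι → α) :
    pinching ν (1 : Matrix ι ι 𝕜) = 1 := by
  ext i j
  by_cases h : i = j <;> simp [pinching, one_apply, h]

lemma pinching_mul [Fintype ι] [Ring 𝕜] (ν : ι → α) (M N : Matrix ι ι 𝕜) :
    pinching ν (M * N) =
      pinching ν M * pinching ν N + pinching ν ((M - pinching ν M) * (N - pinching ν N)) := by
  ext i j
  by_cases hij : ν i = ν j
  · simp only [pinching, mul_apply, Matrix.add_apply, Matrix.sub_apply, of_apply, if_pos hij,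
      ← Finset.sum_add_distrib]
    refine Finset.sum_congr rfl fun k _ => ?_
    by_cases hik : ν i = ν k
    · simp [hik, ← hij]
    · simp [hik, ← hij, Ne.symm hik]
  · simp only [pinching, mul_apply, Matrix.add_apply, of_apply, if_neg hij, add_zero]
    refine (Finset.sum_eq_zero fun k _ => ?_).symm
    by_cases hik : ν i = ν k
    · simp [← hik, hij]
    · simp [hik]

lemma commute_pinching_diagonal [Fintype ι] [DecidableEq ι] [CommSemiring 𝕜] (g : α → 𝕜)
    (ν : ι → α) (M : Matrix ι ι 𝕜) : Commute (pinching ν M) (diagonal (g ∘ ν)) := by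
  ext i j
  simp only [pinching, mul_diagonal, diagonal_mul, of_apply, Function.comp_apply]
  split_ifs with hij
  · rw [hij, mul_comm]
  · rw [zero_mul, mul_zero]

variable [Fintype ι] [RCLike 𝕜]

lemma frobenius_norm_pinching_le (ν : ι → α) (M : Matrix ι ι 𝕜) : ‖pinching ν M‖ ≤ ‖M‖ := by
  refine (pow_le_pow_iff_left₀ (norm_nonneg _) (norm_nonneg _) two_ne_zero).mp ?_
  simp only [frobenius_norm_sq, pinching, of_apply]
  gcongr with i _ j
  split_ifs
  · rfl
  · simpa only [norm_zero] using norm_nonneg (M i j)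

lemma exists_unitary_commute_diagonal_norm_sub_le [DecidableEq ι] {ν : ι → α} {c : Matrix ι ι 𝕜}
    (hc : c ∈ unitaryGroup ι 𝕜) (hlt : ‖c - pinching ν c‖ < 1) :
    ∃ Q ∈ unitaryGroup ι 𝕜, (∀ g : α → 𝕜, Commute Q (diagonal (g ∘ ν))) ∧
      ‖Q - c‖ ≤ 2 * ‖c - pinching ν c‖ := by
  set D := pinching ν c
  set E := c - D
  have hDstar : Dᴴ = pinching ν cᴴ := conjTranspose_pinching ν c
  have hdefect : 1 - D * Dᴴ = pinching ν (E * Eᴴ) := by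
    rw [sub_eq_iff_eq_add', conjTranspose_sub, hDstar, ← pinching_mul, ← star_eq_conjTranspose,
      mem_unitaryGroup_iff.mp hc, pinching_one]
  have hdefect_le : ‖1 - D * Dᴴ‖ ≤ ‖E‖ := calc
    ‖1 - D * Dᴴ‖ ≤ ‖E * Eᴴ‖ := hdefect ▸ frobenius_norm_pinching_le ν _
    _ ≤ ‖E‖ * ‖E‖ := (frobenius_norm_mul _ _).trans_eq (by rw [frobenius_norm_conjTranspose])
    _ ≤ ‖E‖ := mul_le_of_le_one_left (norm_nonneg _) hlt.le
  obtain ⟨Q, hQ, hQ_comm, hQD⟩ := exists_unitary_polar_factor (hdefect_le.trans_lt hlt)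
  refine ⟨Q, hQ, fun g => hQ_comm _ (commute_pinching_diagonal g ν c)
    (hDstar ▸ commute_pinching_diagonal g ν cᴴ), ?_⟩
  calc ‖Q - c‖ ≤ ‖Q - D‖ + ‖D - c‖ := norm_sub_le_norm_sub_add_norm_sub Q D c
    _ ≤ ‖E‖ + ‖E‖ := add_le_add (hQD.trans hdefect_le) (norm_sub_rev D c).le
    _ = 2 * ‖E‖ := (two_mul _).symm

end Pinching

section Eigenbasis

open scoped Matrix.Norms.Frobenius Topology

lemma exists_pos_forall_ne_le_dist {ι X : Type*} [Finite ι] [MetricSpace X] (f : ι → X) :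
    ∃ g > 0, ∀ i j, f i ≠ f j → g ≤ dist (f i) (f j) := by
  have hsmall : ∀ᶠ g in 𝓝[>] (0 : ℝ), ∀ i j, f i ≠ f j → g ≤ dist (f i) (f j) := by
    simp only [Filter.eventually_all]
    exact fun i j hij => (eventually_le_nhds (dist_pos.mpr hij)).filter_mono nhdsWithin_le_nhds
  exact (eventually_mem_nhdsWithin.and hsmall).exists

variable {ι 𝕜 : Type*} [Fintype ι] [DecidableEq ι] [RCLike 𝕜]
  {A B U V : Matrix ι ι 𝕜} {a b : ι → ℝ}

/-- The columns of `U` form an orthonormal basis of eigenvectors of `A`, the `i`-th column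
belonging to the eigenvalue `a i`. -/
structure IsOrthonormalEigenbasis (A : Matrix ι ι 𝕜) (a : ι → ℝ) (U : Matrix ι ι 𝕜) : Prop where
  mem_unitaryGroup : U ∈ unitaryGroup ι 𝕜
  mul_eq : A * U = U * diagonal (RCLike.ofReal ∘ a)

namespace IsOrthonormalEigenbasis

lemma conjTranspose_mul_self (hU : IsOrthonormalEigenbasis A a U) : Uᴴ * U = 1 :=
  mem_unitaryGroup_iff'.mp hU.mem_unitaryGroup

lemma mul_conjTranspose_self (hU : IsOrthonormalEigenbasis A a U) : U * Uᴴ = 1 :=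
  mem_unitaryGroup_iff.mp hU.mem_unitaryGroup

lemma conjTranspose_mul_eq (hU : IsOrthonormalEigenbasis A a U) :
    Uᴴ * A = diagonal (RCLike.ofReal ∘ a) * Uᴴ := calc
  Uᴴ * A = Uᴴ * (A * U) * Uᴴ := by
    rw [Matrix.mul_assoc, Matrix.mul_assoc, hU.mul_conjTranspose_self, Matrix.mul_one]
  _ = diagonal (RCLike.ofReal ∘ a) * Uᴴ := by
    rw [hU.mul_eq, ← Matrix.mul_assoc, hU.conjTranspose_mul_self, Matrix.one_mul]

lemma mul_of_commute (hU : IsOrthonormalEigenbasis A a U) {Q : Matrix ι ι 𝕜}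
    (hQ : Q ∈ unitaryGroup ι 𝕜) (hcomm : Commute Q (diagonal (RCLike.ofReal ∘ a))) :
    IsOrthonormalEigenbasis A a (U * Q) where
  mem_unitaryGroup := mul_mem hU.mem_unitaryGroup hQ
  mul_eq := by rw [← Matrix.mul_assoc, hU.mul_eq, Matrix.mul_assoc, ← hcomm.eq, Matrix.mul_assoc]

lemma norm_sub_sq_eq_sum (hU : IsOrthonormalEigenbasis A a U)
    (hV : IsOrthonormalEigenbasis B b V) :
    ‖A - B‖ ^ 2 = ∑ i, ∑ j, ‖(Uᴴ * V) i j‖ ^ 2 * (a i - b j) ^ 2 := by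
  have hentry (i j : ι) : (Uᴴ * (A - B) * V) i j = (Uᴴ * V) i j * ((a i - b j : ℝ) : 𝕜) := by
    rw [Matrix.mul_sub, Matrix.sub_mul, hU.conjTranspose_mul_eq, Matrix.mul_assoc Uᴴ B, hV.mul_eq,
      Matrix.mul_assoc, ← Matrix.mul_assoc Uᴴ V, Matrix.sub_apply, diagonal_mul, mul_diagonal]
    simp only [Function.comp_apply, RCLike.ofReal_sub]
    ring
  rw [← frobenius_norm_mul_left_of_conjTranspose_mul (V := Uᴴ)
      (by rw [conjTranspose_conjTranspose, hU.mul_conjTranspose_self]) (A - B),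
    ← frobenius_norm_mul_right_of_mul_conjTranspose hV.mul_conjTranspose_self, frobenius_norm_sq]
  simp only [hentry, norm_mul, mul_pow, RCLike.norm_ofReal, sq_abs]

lemma sum_sub_sq_le_norm_sub_sq (hU : IsOrthonormalEigenbasis A a U)
    (hV : IsOrthonormalEigenbasis B b V) (hab : Monovary a b) :
    ∑ i, (a i - b i) ^ 2 ≤ ‖A - B‖ ^ 2 :=
  (norm_sub_sq_eq_sum hU hV).symm ▸ sum_sub_sq_le_of_mem_doublyStochastic
    (normSq_mem_doublyStochastic_of_mem_unitaryGroup
      (conjTranspose_mul_mem_unitaryGroup hU.mem_unitaryGroup hV.mem_unitaryGroup)) hab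

lemma abs_sub_le_norm_sub (hU : IsOrthonormalEigenbasis A a U)
    (hV : IsOrthonormalEigenbasis B b V) (hab : Monovary a b) (i : ι) :
    |a i - b i| ≤ ‖A - B‖ := by
  refine abs_le_of_sq_le_sq ?_ (norm_nonneg _)
  exact (Finset.single_le_sum (fun j _ => sq_nonneg (a j - b j)) (Finset.mem_univ i)).trans
    (hU.sum_sub_sq_le_norm_sub_sq hV hab)

lemma mul_norm_sub_pinching_le (hU : IsOrthonormalEigenbasis A a U)
    (hV : IsOrthonormalEigenbasis B b V) (hab : Monovary a b) {g : ℝ}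
    (hg : ∀ i j, a i ≠ a j → g ≤ |a i - a j|) (hAB : ‖A - B‖ ≤ g / 2) :
    g / 2 * ‖Uᴴ * V - pinching a (Uᴴ * V)‖ ≤ ‖A - B‖ := by
  have hg_nonneg : 0 ≤ g / 2 := (norm_nonneg _).trans hAB
  refine (pow_le_pow_iff_left₀ (by positivity) (norm_nonneg _) two_ne_zero).mp ?_
  rw [mul_pow, frobenius_norm_sq, hU.norm_sub_sq_eq_sum hV, Finset.mul_sum]
  simp only [Finset.mul_sum]
  refine Finset.sum_le_sum fun i _ => Finset.sum_le_sum fun j _ => ?_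
  by_cases hij : a i = a j
  · simp only [pinching, Matrix.sub_apply, of_apply, if_pos hij, sub_self, norm_zero]
    rw [zero_pow two_ne_zero, mul_zero]
    positivity
  · have hsep : g / 2 ≤ |a i - b j| := by
      linarith [hg i j hij, abs_sub_le (a i) (b j) (a j), abs_sub_comm (b j) (a j),
        hU.abs_sub_le_norm_sub hV hab j]
    rw [mul_comm, ← sq_abs (a i - b j)]
    simp only [pinching, Matrix.sub_apply, of_apply, if_neg hij, sub_zero]
    gcongr

lemma exists_mul_norm_sub_le_of_norm_sub_lt (hU : IsOrthonormalEigenbasis A a U)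
    (hV : IsOrthonormalEigenbasis B b V) (hab : Monovary a b) {g : ℝ}
    (hg : ∀ i j, a i ≠ a j → g ≤ |a i - a j|) (hAB : ‖A - B‖ < g / 2) :
    ∃ W, IsOrthonormalEigenbasis A a W ∧ g * ‖W - V‖ ≤ 4 * ‖A - B‖ := by
  have hg_pos : 0 < g := by linarith [norm_nonneg (A - B)]
  have hoff := hU.mul_norm_sub_pinching_le hV hab hg hAB.le
  have hoff_lt : ‖Uᴴ * V - pinching a (Uᴴ * V)‖ < 1 :=
    lt_of_mul_lt_mul_left (by linarith) (half_pos hg_pos).le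
  obtain ⟨Q, hQ, hQ_comm, hQ_near⟩ := exists_unitary_commute_diagonal_norm_sub_le
    (conjTranspose_mul_mem_unitaryGroup hU.mem_unitaryGroup hV.mem_unitaryGroup) hoff_lt
  refine ⟨U * Q, hU.mul_of_commute hQ (hQ_comm _), ?_⟩
  calc g * ‖U * Q - V‖ = g * ‖U * (Q - Uᴴ * V)‖ := by
        rw [Matrix.mul_sub, ← Matrix.mul_assoc, hU.mul_conjTranspose_self, Matrix.one_mul]
    _ = g * ‖Q - Uᴴ * V‖ := by
        rw [frobenius_norm_mul_left_of_conjTranspose_mul hU.conjTranspose_mul_self]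
    _ ≤ g * (2 * ‖Uᴴ * V - pinching a (Uᴴ * V)‖) := by gcongr
    _ ≤ 4 * ‖A - B‖ := by linarith

lemma exists_forall_exists_norm_sub_le (hU : IsOrthonormalEigenbasis A a U) :
    ∃ K, ∀ {B V : Matrix ι ι 𝕜} {b : ι → ℝ}, IsOrthonormalEigenbasis B b V → Monovary a b →
      ∃ W, IsOrthonormalEigenbasis A a W ∧ ‖W - V‖ ≤ K * ‖A - B‖ := by
  obtain ⟨g, hg_pos, hg⟩ := exists_pos_forall_ne_le_dist a
  refine ⟨4 / g * max 1 ‖(1 : Matrix ι ι 𝕜)‖, fun {B V b} hV hab => ?_⟩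
  rcases lt_or_ge ‖A - B‖ (g / 2) with hsmall | hlarge
  · obtain ⟨W, hW, hWV⟩ := hU.exists_mul_norm_sub_le_of_norm_sub_lt hV hab hg hsmall
    refine ⟨W, hW, ?_⟩
    calc ‖W - V‖ ≤ 4 / g * 1 * ‖A - B‖ := by
          rw [mul_one, div_mul_eq_mul_div, le_div_iff₀' hg_pos]
          exact hWV
      _ ≤ 4 / g * max 1 ‖(1 : Matrix ι ι 𝕜)‖ * ‖A - B‖ := by gcongr; exact le_max_left _ _
  · refine ⟨U, hU, ?_⟩
    calc ‖U - V‖ ≤ 2 * ‖(1 : Matrix ι ι 𝕜)‖ :=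
          frobenius_norm_sub_le_of_mem_unitaryGroup hU.mem_unitaryGroup hV.mem_unitaryGroup
      _ = 4 / g * ‖(1 : Matrix ι ι 𝕜)‖ * (g / 2) := by field_simp; ring
      _ ≤ 4 / g * max 1 ‖(1 : Matrix ι ι 𝕜)‖ * ‖A - B‖ := by gcongr; exact le_max_right _ _

end IsOrthonormalEigenbasis

end Eigenbasis

section SpectralConfiguration

open scoped Matrix.Norms.Frobenius

lemma abs_sqrt_max_sub_mul_add_le (x y : ℝ) :
    |√(max x 0) - √(max y 0)| * (√(max x 0) + √(max y 0)) ≤ |x - y| := calc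
  _ = |(√(max x 0) + √(max y 0)) * (√(max x 0) - √(max y 0))| := by
    rw [abs_mul, abs_of_nonneg (by positivity : 0 ≤ √(max x 0) + √(max y 0)), mul_comm]
  _ = |max x 0 - max y 0| := by
    rw [← sq_sub_sq, Real.sq_sqrt (le_max_right x 0), Real.sq_sqrt (le_max_right y 0)]
  _ ≤ |x - y| := abs_max_sub_max_le_abs x y 0

lemma sq_sqrt_max_sub_le_abs (x y : ℝ) : (√(max x 0) - √(max y 0)) ^ 2 ≤ |x - y| := by
  refine le_trans ?_ (abs_sqrt_max_sub_mul_add_le x y)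
  rw [← sq_abs, sq]
  gcongr
  simpa only [abs_of_nonneg (Real.sqrt_nonneg _)] using abs_sub (√(max x 0)) (√(max y 0))

lemma sq_sqrt_max_sub_le_inv_mul_sq {x : ℝ} (hx : 0 < x) (y : ℝ) :
    (√(max x 0) - √(max y 0)) ^ 2 ≤ x⁻¹ * (x - y) ^ 2 := by
  rw [le_inv_mul_iff₀ hx]
  calc x * (√(max x 0) - √(max y 0)) ^ 2
      = (|√(max x 0) - √(max y 0)| * √(max x 0)) ^ 2 := by
        rw [mul_pow, sq_abs, Real.sq_sqrt (le_max_right x 0), max_eq_left hx.le, mul_comm]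
    _ ≤ (|√(max x 0) - √(max y 0)| * (√(max x 0) + √(max y 0))) ^ 2 := by
        gcongr
        exact le_add_of_nonneg_right (Real.sqrt_nonneg _)
    _ ≤ |x - y| ^ 2 := by
        gcongr
        exact abs_sqrt_max_sub_mul_add_le x y
    _ = (x - y) ^ 2 := sq_abs _

variable {m ι κ 𝕜 : Type*} [Fintype m] [Fintype ι] [Fintype κ] [DecidableEq κ] [RCLike 𝕜]

lemma frobenius_norm_sq_diagonal (v : κ → 𝕜) : ‖diagonal v‖ ^ 2 = ∑ k, ‖v k‖ ^ 2 := by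
  rw [frobenius_norm_diagonal, EuclideanSpace.norm_sq_eq]

lemma norm_mul_diagonal_sub_mul_diagonal_le (W : Matrix m κ 𝕜) {V : Matrix m κ 𝕜}
    (hV : Vᴴ * V = 1) (α β : κ → 𝕜) :
    ‖W * diagonal α - V * diagonal β‖
      ≤ ‖W - V‖ * ‖diagonal α‖ + ‖diagonal (fun k => α k - β k)‖ := calc
  _ = ‖(W - V) * diagonal α + V * diagonal (fun k => α k - β k)‖ := by
    rw [← diagonal_sub, Matrix.sub_mul, Matrix.mul_sub]; congr 1; abel
  _ ≤ ‖(W - V) * diagonal α‖ + ‖V * diagonal (fun k => α k - β k)‖ := norm_add_le _ _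
  _ ≤ ‖W - V‖ * ‖diagonal α‖ + ‖diagonal (fun k => α k - β k)‖ := by
    rw [frobenius_norm_mul_left_of_conjTranspose_mul hV]
    gcongr
    exact frobenius_norm_mul _ _

/-- The spectral configuration of an eigenbasis `U` with eigenvalues `a`: the `k`-th coordinates of
its points, one point per row, are the entries of the `f k`-th eigenvector scaled by the square root
of the positive part of its eigenvalue. Classical scaling is the case where `f` selects the top
eigenvalues. -/
def spectralConfiguration (f : κ → ι) (a : ι → ℝ) (U : Matrix ι ι 𝕜) : Matrix ι κ 𝕜 :=
  U.submatrix id f * diagonal fun k => ((√(max (a (f k)) 0) : ℝ) : 𝕜)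

variable [DecidableEq ι] {A B U V W : Matrix ι ι 𝕜} {a b : ι → ℝ} {f : κ → ι}

lemma norm_spectralConfiguration_sub_sq_le (hV : V ∈ unitaryGroup ι 𝕜) (hf : f.Injective)
    (a b : ι → ℝ) (W : Matrix ι ι 𝕜) :
    ‖spectralConfiguration f a W - spectralConfiguration f b V‖ ^ 2
      ≤ 2 * ((∑ k, max (a (f k)) 0) * ‖W - V‖ ^ 2
        + ∑ k, (√(max (a (f k)) 0) - √(max (b (f k)) 0)) ^ 2) := by
  have hsplit := norm_mul_diagonal_sub_mul_diagonal_le (W.submatrix id f)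
    (conjTranspose_submatrix_mul_submatrix_of_mem_unitaryGroup hV hf)
    (fun k => ((√(max (a (f k)) 0) : ℝ) : 𝕜)) (fun k => ((√(max (b (f k)) 0) : ℝ) : 𝕜))
  have hsub : ‖W.submatrix id f - V.submatrix id f‖ ≤ ‖W - V‖ :=
    frobenius_norm_submatrix_id_le (W - V) hf
  refine (pow_le_pow_left₀ (norm_nonneg _) hsplit 2).trans (add_sq_le.trans ?_)
  rw [mul_pow, frobenius_norm_sq_diagonal, frobenius_norm_sq_diagonal, mul_comm (_ ^ 2)]
  simp only [← RCLike.ofReal_sub, RCLike.norm_ofReal, sq_abs, Real.sq_sqrt (le_max_right _ _)]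
  gcongr

namespace IsOrthonormalEigenbasis

lemma norm_spectralConfiguration_sub_sq_le_mul_norm_sq (hW : IsOrthonormalEigenbasis A a W)
    (hV : IsOrthonormalEigenbasis B b V) (hab : Monovary a b) (hf : f.Injective)
    (hpos : ∀ k, 0 < a (f k)) {K : ℝ} (hWV : ‖W - V‖ ≤ K * ‖A - B‖) :
    ‖spectralConfiguration f a W - spectralConfiguration f b V‖ ^ 2
      ≤ 2 * ((∑ k, max (a (f k)) 0) * K ^ 2 + ∑ k, (a (f k))⁻¹) * ‖A - B‖ ^ 2 := by
  have hvec : ‖W - V‖ ^ 2 ≤ K ^ 2 * ‖A - B‖ ^ 2 :=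
    (pow_le_pow_left₀ (norm_nonneg _) hWV 2).trans_eq (mul_pow _ _ _)
  have hval : ∑ k, (√(max (a (f k)) 0) - √(max (b (f k)) 0)) ^ 2
      ≤ (∑ k, (a (f k))⁻¹) * ‖A - B‖ ^ 2 := by
    rw [Finset.sum_mul]
    gcongr with k
    refine (sq_sqrt_max_sub_le_inv_mul_sq (hpos k) _).trans ?_
    rw [← sq_abs (a (f k) - b (f k))]
    have := hpos k
    have := hW.abs_sub_le_norm_sub hV hab (f k)
    gcongr
  calc _ ≤ _ := norm_spectralConfiguration_sub_sq_le hV.mem_unitaryGroup hf a b W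
    _ ≤ 2 * ((∑ k, max (a (f k)) 0) * (K ^ 2 * ‖A - B‖ ^ 2)
          + (∑ k, (a (f k))⁻¹) * ‖A - B‖ ^ 2) := by gcongr
    _ = _ := by ring

lemma norm_spectralConfiguration_sub_sq_le_mul_norm (hW : IsOrthonormalEigenbasis A a W)
    (hV : IsOrthonormalEigenbasis B b V) (hab : Monovary a b) (hf : f.Injective)
    {K : ℝ} (hWV : ‖W - V‖ ≤ K * ‖A - B‖) :
    ‖spectralConfiguration f a W - spectralConfiguration f b V‖ ^ 2
      ≤ 2 * ((∑ k, max (a (f k)) 0) * (2 * ‖(1 : Matrix ι ι 𝕜)‖ * K) + Fintype.card κ)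
        * ‖A - B‖ := by
  have hvec : ‖W - V‖ ^ 2 ≤ 2 * ‖(1 : Matrix ι ι 𝕜)‖ * (K * ‖A - B‖) := by
    rw [sq]
    gcongr
    exact frobenius_norm_sub_le_of_mem_unitaryGroup hW.mem_unitaryGroup hV.mem_unitaryGroup
  have hval : ∑ k, (√(max (a (f k)) 0) - √(max (b (f k)) 0)) ^ 2
      ≤ Fintype.card κ * ‖A - B‖ := by
    rw [← nsmul_eq_mul]
    exact Finset.sum_le_card_nsmul _ _ _ fun k _ =>
      (sq_sqrt_max_sub_le_abs _ _).trans (hW.abs_sub_le_norm_sub hV hab (f k))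
  calc _ ≤ _ := norm_spectralConfiguration_sub_sq_le hV.mem_unitaryGroup hf a b W
    _ ≤ 2 * ((∑ k, max (a (f k)) 0) * (2 * ‖(1 : Matrix ι ι 𝕜)‖ * (K * ‖A - B‖))
          + Fintype.card κ * ‖A - B‖) := by gcongr
    _ = _ := by ring

lemma exists_forall_exists_norm_spectralConfiguration_sub_sq_le
    (hU : IsOrthonormalEigenbasis A a U) (hf : f.Injective) :
    ∃ C > 0, ∀ {B V : Matrix ι ι 𝕜} {b : ι → ℝ}, IsOrthonormalEigenbasis B b V → Monovary a b →
      ∃ W, IsOrthonormalEigenbasis A a W ∧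
        ((∀ k, 0 < a (f k)) →
          ‖spectralConfiguration f a W - spectralConfiguration f b V‖ ^ 2 ≤ C * ‖A - B‖ ^ 2) ∧
        ‖spectralConfiguration f a W - spectralConfiguration f b V‖ ^ 2 ≤ C * ‖A - B‖ := by
  obtain ⟨K, hK⟩ := hU.exists_forall_exists_norm_sub_le
  set C₁ := 2 * ((∑ k, max (a (f k)) 0) * K ^ 2 + ∑ k, (a (f k))⁻¹)
  set C₂ := 2 * ((∑ k, max (a (f k)) 0) * (2 * ‖(1 : Matrix ι ι 𝕜)‖ * K) + Fintype.card κ)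
  refine ⟨max 1 (max C₁ C₂), by positivity, fun {B V b} hV hab => ?_⟩
  obtain ⟨W, hW, hWV⟩ := hK hV hab
  refine ⟨W, hW, fun hpos => ?_, ?_⟩
  · refine (hW.norm_spectralConfiguration_sub_sq_le_mul_norm_sq hV hab hf hpos hWV).trans ?_
    gcongr
    exact (le_max_left _ _).trans (le_max_right _ _)
  · refine (hW.norm_spectralConfiguration_sub_sq_le_mul_norm hV hab hf hWV).trans ?_
    gcongr
    exact (le_max_right _ _).trans (le_max_right _ _)

end IsOrthonormalEigenbasis

end SpectralConfiguration

section ClassicalScaling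

open scoped Matrix.Norms.Frobenius

variable {n : ℕ}

lemma frob_eq_norm (M : Matrix (Fin n) (Fin n) ℝ) : frob M = ‖M‖ := by
  rw [frob, ← Real.sqrt_sq (norm_nonneg M), frobenius_norm_sq]
  simp only [Real.norm_eq_abs, sq_abs]

lemma isHermitian_Hmat (n : ℕ) : (Hmat n).IsHermitian := by
  ext i j
  simp [Hmat, one_apply, eq_comm]

lemma Hmat_mul_self (n : ℕ) : Hmat n * Hmat n = Hmat n := by
  refine IsIdempotentElem.one_sub ?_
  ext i j
  have hn : (n : ℝ) ≠ 0 := Nat.cast_ne_zero.mpr i.pos.ne'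
  simp [mul_apply, hn]

lemma norm_Hmat_sq_le (n : ℕ) : ‖Hmat n‖ ^ 2 ≤ n := by
  rw [frobenius_norm_sq_eq_re_trace, (isHermitian_Hmat n).eq, Hmat_mul_self]
  simpa [Hmat, trace] using mul_nonneg n.cast_nonneg (inv_nonneg.mpr (n.cast_nonneg (α := ℝ)))

lemma norm_Bmat_sub_le (δ δh : Matrix (Fin n) (Fin n) ℝ) :
    ‖Bmat δ - Bmat δh‖ ≤ n * ‖Amat δ - Amat δh‖ := calc
  ‖Bmat δ - Bmat δh‖ = ‖Hmat n * (Amat δ - Amat δh) * Hmat n‖ := by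
    rw [Bmat, Bmat, Matrix.mul_sub, Matrix.sub_mul]
  _ ≤ ‖Hmat n‖ * ‖Amat δ - Amat δh‖ * ‖Hmat n‖ := norm_mul₃_le
  _ = ‖Hmat n‖ ^ 2 * ‖Amat δ - Amat δh‖ := by ring
  _ ≤ n * ‖Amat δ - Amat δh‖ := by
    gcongr
    exact norm_Hmat_sq_le n

lemma isEigenDecomp_iff {δ : Matrix (Fin n) (Fin n) ℝ} {ν : Fin n → ℝ} {u : Fin n → Fin n → ℝ} :
    IsEigenDecomp δ ν u ↔ Antitone ν ∧ IsOrthonormalEigenbasis (Bmat δ) ν (of u)ᵀ := by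
  have horth : (of u)ᵀ ∈ unitaryGroup (Fin n) ℝ ↔
      ∀ k l, ∑ i, u k i * u l i = if k = l then (1 : ℝ) else 0 := by
    rw [mem_unitaryGroup_iff', ← Matrix.ext_iff]
    simp [mul_apply, one_apply, star_eq_conjTranspose]
  have heig : Bmat δ * (of u)ᵀ = (of u)ᵀ * diagonal (RCLike.ofReal ∘ ν) ↔
      ∀ k, (Bmat δ).mulVec (u k) = ν k • u k := by
    rw [← Matrix.ext_iff, forall_comm]
    simp only [mul_diagonal]
    simp [mul_apply, funext_iff, mulVec, dotProduct, mul_comm]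
  rw [IsEigenDecomp, ← horth, ← heig]
  exact and_congr_right fun _ => ⟨fun h => ⟨h.1, h.2⟩, fun h => ⟨h.1, h.2⟩⟩

lemma isCSEmbedding_iff {de : ℕ} {hden : de ≤ n} {δ : Matrix (Fin n) (Fin n) ℝ}
    {p : Fin n → EuclideanSpace ℝ (Fin de)} :
    IsCSEmbedding de hden δ p ↔ ∃ ν U, Antitone ν ∧ IsOrthonormalEigenbasis (Bmat δ) ν U ∧
      ∀ i k, p i k = spectralConfiguration (Fin.castLE hden) ν U i k := by
  constructor
  · rintro ⟨ν, u, hdecomp, hp⟩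
    obtain ⟨hν, hU⟩ := isEigenDecomp_iff.mp hdecomp
    exact ⟨ν, (of u)ᵀ, hν, hU, fun i k => by simp [hp, spectralConfiguration, mul_comm]⟩
  · rintro ⟨ν, U, hν, hU, hp⟩
    exact ⟨ν, fun k i => U i k, isEigenDecomp_iff.mpr ⟨hν, hU⟩,
      fun i k => by simp [hp, spectralConfiguration, mul_comm]⟩

lemma norm_sub_sq_eq_sum_of_forall_apply_eq {m κ : Type*} [Fintype m] [Fintype κ]
    {M N : Matrix m κ ℝ} {p q : m → EuclideanSpace ℝ κ} (hp : ∀ i k, p i k = M i k)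
    (hq : ∀ i k, q i k = N i k) : ‖M - N‖ ^ 2 = ∑ i, ‖p i - q i‖ ^ 2 := by
  simp only [frobenius_norm_sq, EuclideanSpace.norm_sq_eq, PiLp.sub_apply, Matrix.sub_apply, hp, hq]

theorem stmt3_general (n de : ℕ) (hde : 1 ≤ de) (hden : de ≤ n)
    (δ : Matrix (Fin n) (Fin n) ℝ) (ν : Fin n → ℝ) (u : Fin n → Fin n → ℝ)
    (hdecomp : IsEigenDecomp δ ν u) :
    ∃ C > (0 : ℝ), ∀ δh : Matrix (Fin n) (Fin n) ℝ,
      ∀ ph : Fin n → EuclideanSpace ℝ (Fin de), IsCSEmbedding de hden δh ph →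
      ∃ p : Fin n → EuclideanSpace ℝ (Fin de), IsCSEmbedding de hden δ p ∧
        (0 < ν (Fin.castLE hden ⟨de - 1, Nat.sub_one_lt_of_lt hde⟩) →
          ∑ i, ‖p i - ph i‖ ^ 2 ≤ C * n ^ 2 * frob (Amat δ - Amat δh) ^ 2) ∧
        ∑ i, ‖p i - ph i‖ ^ 2 ≤ C * n ^ 2 * frob (Amat δ - Amat δh) := by
  obtain ⟨hν, hU⟩ := isEigenDecomp_iff.mp hdecomp
  obtain ⟨C, hC, hstable⟩ :=
    hU.exists_forall_exists_norm_spectralConfiguration_sub_sq_le (Fin.castLE_injective hden)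
  refine ⟨C, hC, fun δh ph hph => ?_⟩
  obtain ⟨νh, V, hνh, hV, hph⟩ := isCSEmbedding_iff.mp hph
  obtain ⟨W, hW, hlipschitz, hholder⟩ := hstable hV (hν.monovary hνh)
  set p : Fin n → EuclideanSpace ℝ (Fin de) := fun i =>
    WithLp.toLp 2 (spectralConfiguration (Fin.castLE hden) ν W i)
  rw [norm_sub_sq_eq_sum_of_forall_apply_eq (p := p) (fun _ _ => rfl) hph] at hlipschitz hholder
  rw [frob_eq_norm]
  have hB := norm_Bmat_sub_le δ δh
  refine ⟨p, isCSEmbedding_iff.mpr ⟨ν, W, hν, hW, fun _ _ => rfl⟩, fun hpos => ?_, ?_⟩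
  · calc _ ≤ C * ‖Bmat δ - Bmat δh‖ ^ 2 :=
          hlipschitz fun k => hpos.trans_le (hν (Fin.le_def.mpr (Nat.le_pred_of_lt k.isLt)))
      _ ≤ C * (n * ‖Amat δ - Amat δh‖) ^ 2 := by gcongr
      _ = C * n ^ 2 * ‖Amat δ - Amat δh‖ ^ 2 := by ring
  · have hn : (n : ℝ) ≤ n ^ 2 := by exact_mod_cast Nat.le_self_pow two_ne_zero n
    calc _ ≤ C * ‖Bmat δ - Bmat δh‖ := hholder
      _ ≤ C * (n ^ 2 * ‖Amat δ - Amat δh‖) := by gcongr; exact hB.trans (by gcongr)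
      _ = C * n ^ 2 * ‖Amat δ - Amat δh‖ := by ring

end ClassicalScaling

theorem stmt3 (n de : ℕ) (hde : 1 ≤ de) (hden : de ≤ n)
    (δ : Matrix (Fin n) (Fin n) ℝ) (hsym : δ.IsSymm) (hdiag : ∀ i, δ i i = 0)
    (hnn : ∀ i j, 0 ≤ δ i j)
    (ν : Fin n → ℝ) (u : Fin n → Fin n → ℝ) (hdecomp : IsEigenDecomp δ ν u)
    (hν : 0 ≤ ν (Fin.castLE hden ⟨de - 1, by omega⟩)) :
    ∃ C > (0 : ℝ), ∀ δh : Matrix (Fin n) (Fin n) ℝ, δh.IsSymm → (∀ i, δh i i = 0) →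
      (∀ i j, 0 ≤ δh i j) →
      ∀ ph : Fin n → EuclideanSpace ℝ (Fin de), IsCSEmbedding de hden δh ph →
      ∃ p : Fin n → EuclideanSpace ℝ (Fin de), IsCSEmbedding de hden δ p ∧
        ((0 < ν (Fin.castLE hden ⟨de - 1, by omega⟩) →
            ∑ i, ‖p i - ph i‖ ^ 2 ≤ C * n ^ 2 * frob (Amat δ - Amat δh) ^ 2) ∧
         (ν (Fin.castLE hden ⟨de - 1, by omega⟩) = 0 →
            ∑ i, ‖p i - ph i‖ ^ 2 ≤ C * n ^ 2 * frob (Amat δ - Amat δh))) := by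
  obtain ⟨C, hC, hstable⟩ := stmt3_general n de hde hden δ ν u hdecomp
  exact ⟨C, hC, fun δh _ _ _ ph hph =>
    (hstable δh ph hph).imp fun p hp => ⟨hp.1, hp.2.1, fun _ => hp.2.2⟩⟩

end Stmt3
end
end

section
/- Let (X, δ) be a proper metric space (every closed ball is compact). Suppose the intrinsic metric δ_L induced by δ satisfies δ_L(q,q') = δ(q,q')·(1 + ω(q,q')) for all q,q' ∈ X, where ω : X×X → ℝ is continuous and ω(q,q) = 0 for all q. Fix p, p' ∈ X with δ_L(p,p') < ∞. For each n, let S_n ⊂ X be a finite set containing p and p', put ε_n = sup_{q ∈ X} min_{s ∈ S_n} δ(q,s), and let r_n > 0. Let d_n(p,p') be the shortest-path distance between p and p' in the graph with vertex set S_n, an edge between s, s' whenever δ(s,s') ≤ r_n, with edge weight δ(s,s') (with d_n(p,p') = ∞ if p, p' are not connected). If ε_n → 0, r_n → 0, and ε_n / r_n → 0, then d_n(p,p') → δ_L(p,p') as n → ∞. -/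
open Filter Set
open scoped ENNReal BigOperators Topology

noncomputable section

namespace Stmt4

variable {X : Type*} [MetricSpace X]

/-- The length of a path `γ : [0,1] → X`: the supremum over partitions
`0 = t₀ < t₁ < ⋯ < t_k = 1` of the sum of distances between consecutive images. -/
def pathLength (γ : ℝ → X) : ℝ≥0∞ :=
  ⨆ (k : ℕ) (t : Fin (k + 1) → ℝ)
    (_ : StrictMono t ∧ t 0 = 0 ∧ t (Fin.last k) = 1),
    ∑ i : Fin k, edist (γ (t i.castSucc)) (γ (t i.succ))

/-- The intrinsic (inner) metric induced by the metric of `X`: the infimum of lengths of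
continuous paths connecting the two points (`∞` if there is no rectifiable path). -/
def intrinsicDist (a b : X) : ℝ≥0∞ :=
  ⨅ (γ : ℝ → X) (_ : ContinuousOn γ (Icc 0 1) ∧ γ 0 = a ∧ γ 1 = b), pathLength γ

/-- The mesh `ε = sup_q min_{s ∈ S} δ(q, s)` of a finite set `S` in `X`. -/
def mesh (S : Finset X) : ℝ≥0∞ :=
  ⨆ q : X, ⨅ s ∈ S, edist q s

/-- The shortest-path distance between `a` and `b` in the graph with vertex set `S`,
an edge between `s, s'` whenever `δ(s,s') ≤ r`, and edge weights `δ(s,s')`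
(`∞` if `a` and `b` are not connected). -/
def graphDist (S : Finset X) (r : ℝ) (a b : X) : ℝ≥0∞ :=
  ⨅ (m : ℕ) (f : Fin (m + 1) → X)
    (_ : (∀ i, f i ∈ S) ∧ f 0 = a ∧ f (Fin.last m) = b ∧
      ∀ i : Fin m, dist (f i.castSucc) (f i.succ) ≤ r),
    ∑ i : Fin m, edist (f i.castSucc) (f i.succ)

/-!
The discrete and the intrinsic distance are compared in both directions. A path of length `L`
is cut greedily at points a distance `r / 2` apart, which takes at most `2 L / r + 1` steps; moving
the cutting points to nearest vertices makes each step at most `2 ε` longer, so the total error is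
at most `(4 L + 2 r) ε / r`, which tends to `0`. Conversely `X` is compact, being proper and
within finite distance of a finite set, so `ω` vanishes uniformly near the diagonal. Hence
`c * δ_L ≤ δ` along short edges for each `c < 1`, and summing over a chain gives `c * δ_L ≤ d_n`.
-/

section Variation

variable {α E : Type*} [PseudoEMetricSpace E]

theorem eVariationOn_range_fin [LinearOrder α] (f : α → E) {k : ℕ} {t : Fin (k + 1) → α}
    (ht : Monotone t) :
    eVariationOn f (range t) = ∑ i : Fin k, edist (f (t i.castSucc)) (f (t i.succ)) := by
  have h_clamp (i : ℕ) (hi : i < k + 1) : Fin.clamp i k = ⟨i, hi⟩ :=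
    Fin.ext (min_eq_left (Nat.lt_succ_iff.mp hi))
  have h_range : range t = (fun i => t (Fin.clamp i k)) '' Iic k := by
    refine Subset.antisymm ?_ (image_subset_iff.mpr fun i _ => mem_range_self _)
    rintro _ ⟨i, rfl⟩
    exact ⟨i, Nat.lt_succ_iff.mp i.isLt, by simp only [h_clamp i i.isLt]⟩
  have h_mono : Monotone fun i => t (Fin.clamp i k) := ht.comp Fin.clamp_monotone
  rw [h_range, eVariationOn.image_range_of_monotone f h_mono, Finset.sum_range]
  refine Finset.sum_congr rfl fun i _ => ?_
  simp only [h_clamp i i.castSucc.isLt, h_clamp (i + 1) i.succ.isLt]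
  rfl

theorem eVariationOn_Icc_add_Icc [LinearOrder α] (f : α → E) {a b c : α} (hab : a ≤ b)
    (hbc : b ≤ c) :
    eVariationOn f (Icc a b) + eVariationOn f (Icc b c) = eVariationOn f (Icc a c) := by
  simpa only [univ_inter] using eVariationOn.Icc_add_Icc f hab hbc (mem_univ b)

variable [ConditionallyCompleteLinearOrder α] [DenselyOrdered α] [TopologicalSpace α]
  [OrderTopology α] {γ : α → E} {a b : α} {h : ℝ≥0∞}

theorem exists_edist_eq_and_add_eVariationOn_le (hab : a ≤ b) (hγ : ContinuousOn γ (Icc a b))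
    (hh : h ≤ edist (γ a) (γ b)) :
    ∃ c ∈ Icc a b, edist (γ a) (γ c) = h ∧
      h + eVariationOn γ (Icc c b) ≤ eVariationOn γ (Icc a b) := by
  obtain ⟨c, hc, rfl⟩ : h ∈ (fun t => edist (γ a) (γ t)) '' Icc a b :=
    intermediate_value_Icc hab (by fun_prop) ⟨by simp, hh⟩
  refine ⟨c, hc, rfl, ?_⟩
  rw [← eVariationOn_Icc_add_Icc γ hc.1 hc.2]
  gcongr
  exact eVariationOn.edist_le γ (left_mem_Icc.mpr hc.1) (right_mem_Icc.mpr hc.1)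

theorem exists_monotone_subdivision_edist_le (hab : a ≤ b) (hγ : ContinuousOn γ (Icc a b))
    (hvar : eVariationOn γ (Icc a b) ≠ ∞) (hh : h ≠ 0) :
    ∃ (n : ℕ) (t : ℕ → α), n * h ≤ eVariationOn γ (Icc a b) ∧ Monotone t ∧
      (∀ i, t i ∈ Icc a b) ∧ t 0 = a ∧ t (n + 1) = b ∧
      ∀ i, edist (γ (t i)) (γ (t (i + 1))) ≤ h := by
  obtain ⟨K, hK⟩ := ENNReal.exists_nat_mul_gt hh hvar
  clear hvar
  induction K generalizing a with
  | zero => simp at hK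
  | succ K ih =>
    rcases le_or_gt (edist (γ a) (γ b)) h with h_short | h_long
    · refine ⟨0, fun | 0 => a | _ + 1 => b, by simp, monotone_nat_of_le_succ ?_, ?_, rfl, rfl, ?_⟩
      all_goals rintro (_ | i)
      exacts [hab, le_rfl, left_mem_Icc.mpr hab, right_mem_Icc.mpr hab, h_short, by simp]
    · obtain ⟨c, hc, h_eq, h_add⟩ := exists_edist_eq_and_add_eVariationOn_le hab hγ h_long.le
      have h_rest : eVariationOn γ (Icc c b) < K * h := by
        refine lt_of_add_lt_add_left (a := h) (h_add.trans_lt (hK.trans_eq ?_))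
        push_cast
        ring
      obtain ⟨n, t, hn, ht_mono, ht_mem, ht_zero, ht_last, ht_step⟩ :=
        ih hc.2 (hγ.mono (Icc_subset_Icc_left hc.1)) h_rest
      have hn_succ : (n + 1 : ℕ) * h ≤ eVariationOn γ (Icc a b) :=
        calc (n + 1 : ℕ) * h = h + n * h := by push_cast; ring
          _ ≤ h + eVariationOn γ (Icc c b) := by gcongr
          _ ≤ eVariationOn γ (Icc a b) := h_add
      refine ⟨n + 1, fun | 0 => a | i + 1 => t i, hn_succ, monotone_nat_of_le_succ ?_, ?_, rfl,
        ht_last, ?_⟩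
      all_goals rintro (_ | i)
      exacts [hc.1.trans (ht_mem 0).1, ht_mono i.le_succ, left_mem_Icc.mpr hab,
        Icc_subset_Icc_left hc.1 (ht_mem i), (ht_zero ▸ h_eq).le, ht_step i]

end Variation

theorem eVariationOn_finset_le_pathLength (γ : ℝ → X) {s : Finset ℝ}
    (hs : (s : Set ℝ) ⊆ Icc 0 1) (hs_zero : 0 ∈ s) (hs_one : 1 ∈ s) :
    eVariationOn γ s ≤ pathLength γ := by
  obtain ⟨k, hk⟩ : ∃ k, s.card = k + 1 :=
    Nat.exists_eq_succ_of_ne_zero (Finset.card_ne_zero_of_mem hs_zero)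
  let t := s.orderEmbOfFin hk
  have ht_mem (i : Fin (k + 1)) : t i ∈ Icc (0 : ℝ) 1 := hs (s.orderEmbOfFin_mem hk i)
  have h_range : range t = s := s.range_orderEmbOfFin hk
  have ht_zero : t 0 = 0 := by
    obtain ⟨i, hi⟩ : (0 : ℝ) ∈ range t := h_range ▸ hs_zero
    exact le_antisymm (hi ▸ t.monotone (Fin.zero_le i)) (ht_mem 0).1
  have ht_one : t (Fin.last k) = 1 := by
    obtain ⟨i, hi⟩ : (1 : ℝ) ∈ range t := h_range ▸ hs_one
    exact le_antisymm (ht_mem _).2 (hi ▸ t.monotone (Fin.le_last i))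
  rw [← h_range, eVariationOn_range_fin γ t.monotone]
  exact le_iSup₂_of_le k t (le_iSup_of_le ⟨t.strictMono, ht_zero, ht_one⟩ le_rfl)

theorem pathLength_eq_eVariationOn (γ : ℝ → X) : pathLength γ = eVariationOn γ (Icc 0 1) := by
  apply le_antisymm
  · refine iSup₂_le fun k t => iSup_le fun ⟨ht, ht_zero, ht_one⟩ => ?_
    rw [← eVariationOn_range_fin γ ht.monotone]
    refine eVariationOn.mono γ (range_subset_iff.mpr fun i => ⟨?_, ?_⟩)
    exacts [ht_zero ▸ ht.monotone (Fin.zero_le i), ht_one ▸ ht.monotone (Fin.le_last i)]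
  · refine iSup_le fun ⟨n, u, hu, hu_mem⟩ => ?_
    let s : Finset ℝ := insert 0 (insert 1 ((Finset.range (n + 1)).image u))
    have hs : (s : Set ℝ) ⊆ Icc 0 1 := by
      simp only [s, Finset.coe_insert, Finset.coe_image, insert_subset_iff, image_subset_iff]
      exact ⟨by simp, by simp, fun i _ => hu_mem i⟩
    have hus : u '' Iic n ⊆ s := by
      rintro _ ⟨i, hi, rfl⟩
      have : i ∈ Finset.range (n + 1) := Finset.mem_range_succ_iff.mpr hi
      simp only [s, Finset.coe_insert, Finset.coe_image]
      exact .inr (.inr (mem_image_of_mem u this))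
    calc ∑ i ∈ Finset.range n, edist (γ (u (i + 1))) (γ (u i))
        = eVariationOn γ (u '' Iic n) := by
          simp only [eVariationOn.image_range_of_monotone γ hu, edist_comm]
      _ ≤ eVariationOn γ s := eVariationOn.mono γ hus
      _ ≤ pathLength γ := eVariationOn_finset_le_pathLength γ hs (by simp [s]) (by simp [s])

/-- The concatenation of two paths parametrised by `[0, 1]`, each run at double speed. It is a path
when `γ 1 = σ 0`. -/
def concat {Y : Type*} (γ σ : ℝ → Y) (t : ℝ) : Y :=
  if t ≤ 1 / 2 then γ (2 * t) else σ (2 * t - 1)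

theorem eqOn_concat_left {Y : Type*} (γ σ : ℝ → Y) :
    EqOn (concat γ σ) (γ ∘ fun t => 2 * t) (Icc 0 (1 / 2)) :=
  fun _ ht => if_pos ht.2

theorem eqOn_concat_right {Y : Type*} {γ σ : ℝ → Y} (h : γ 1 = σ 0) :
    EqOn (concat γ σ) (σ ∘ fun t => 2 * t - 1) (Icc (1 / 2) 1) := by
  intro t ht
  rcases ht.1.eq_or_lt with rfl | ht_lt
  · norm_num [concat, h]
  · exact if_neg ht_lt.not_ge

theorem image_two_mul_Icc : (fun t : ℝ => 2 * t) '' Icc 0 (1 / 2) = Icc 0 1 := by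
  rw [image_mul_left_Icc (by norm_num) (by norm_num)]
  norm_num

theorem image_two_mul_sub_one_Icc : (fun t : ℝ => 2 * t - 1) '' Icc (1 / 2) 1 = Icc 0 1 := by
  have h := image_affine_Icc' (zero_lt_two (α := ℝ)) (-1) (1 / 2) 1
  norm_num [← sub_eq_add_neg] at h
  exact h

theorem continuousOn_concat {Y : Type*} [TopologicalSpace Y] {γ σ : ℝ → Y}
    (hγ : ContinuousOn γ (Icc 0 1)) (hσ : ContinuousOn σ (Icc 0 1)) (h : γ 1 = σ 0) :
    ContinuousOn (concat γ σ) (Icc 0 1) := by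
  have h_left : ContinuousOn (concat γ σ) (Icc 0 (1 / 2)) :=
    (hγ.comp (by fun_prop) (mapsTo_iff_image_subset.mpr image_two_mul_Icc.subset)).congr
      (eqOn_concat_left γ σ)
  have h_right : ContinuousOn (concat γ σ) (Icc (1 / 2) 1) :=
    (hσ.comp (by fun_prop) (mapsTo_iff_image_subset.mpr image_two_mul_sub_one_Icc.subset)).congr
      (eqOn_concat_right h)
  simpa only [Icc_union_Icc_eq_Icc (by norm_num : (0 : ℝ) ≤ 1 / 2) (by norm_num : 1 / 2 ≤ (1 : ℝ))]
    using h_left.union_of_isClosed h_right isClosed_Icc isClosed_Icc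

theorem pathLength_concat {γ σ : ℝ → X} (h : γ 1 = σ 0) :
    pathLength (concat γ σ) = pathLength γ + pathLength σ := by
  have h_mono_left : MonotoneOn (fun t : ℝ => 2 * t) (Icc 0 (1 / 2)) :=
    fun x _ y _ hxy => by dsimp only; linarith
  have h_mono_right : MonotoneOn (fun t : ℝ => 2 * t - 1) (Icc (1 / 2) 1) :=
    fun x _ y _ hxy => by dsimp only; linarith
  simp only [pathLength_eq_eVariationOn]
  rw [← eVariationOn_Icc_add_Icc (concat γ σ) one_half_pos.le one_half_lt_one.le,
    eVariationOn.congr (eqOn_concat_left γ σ), eVariationOn.congr (eqOn_concat_right h),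
    eVariationOn.comp_eq_of_monotoneOn γ _ h_mono_left,
    eVariationOn.comp_eq_of_monotoneOn σ _ h_mono_right, image_two_mul_Icc,
    image_two_mul_sub_one_Icc]

theorem intrinsicDist_le_pathLength {γ : ℝ → X} (hγ : ContinuousOn γ (Icc 0 1)) :
    intrinsicDist (γ 0) (γ 1) ≤ pathLength γ :=
  iInf₂_le γ ⟨hγ, rfl, rfl⟩

theorem intrinsicDist_self (a : X) : intrinsicDist a a = 0 := by
  have h_const : pathLength (fun _ => a) = 0 := by
    rw [pathLength_eq_eVariationOn]
    exact eVariationOn.constant_on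
      (subsingleton_singleton.anti (image_subset_iff.mpr fun _ _ => rfl))
  exact nonpos_iff_eq_zero.mp
    ((intrinsicDist_le_pathLength (γ := fun _ => a) continuousOn_const).trans_eq h_const)

theorem intrinsicDist_triangle (a b c : X) :
    intrinsicDist a c ≤ intrinsicDist a b + intrinsicDist b c := by
  refine ENNReal.le_iInf₂_add_iInf₂ ?_
  rintro γ ⟨hγ, rfl, hγ_one⟩ σ ⟨hσ, rfl, rfl⟩
  rw [← pathLength_concat hγ_one]
  convert intrinsicDist_le_pathLength (continuousOn_concat hγ hσ hγ_one) using 2 <;>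
    norm_num [concat]

theorem intrinsicDist_le_sum {m : ℕ} (f : Fin (m + 1) → X) :
    intrinsicDist (f 0) (f (Fin.last m)) ≤
      ∑ i : Fin m, intrinsicDist (f i.castSucc) (f i.succ) := by
  induction m with
  | zero => exact (intrinsicDist_self _).le
  | succ m ih =>
    rw [Fin.sum_univ_castSucc]
    exact (intrinsicDist_triangle _ (f (Fin.last m).castSucc) _).trans
      (add_le_add_left (ih fun i => f i.castSucc) _)

theorem exists_mem_edist_le_mesh {S : Finset X} (hS : mesh S ≠ ∞) (q : X) :
    ∃ s ∈ S, edist q s ≤ mesh S := by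
  have h_le : ⨅ s ∈ S, edist q s ≤ mesh S := le_iSup (fun q => ⨅ s ∈ S, edist q s) q
  obtain ⟨s₀, hs₀, -⟩ := by simpa only [iInf_lt_iff] using h_le.trans_lt hS.lt_top
  obtain ⟨s, hs, hs_min⟩ := S.exists_min_image (edist q) ⟨s₀, hs₀⟩
  exact ⟨s, hs, (le_iInf₂ hs_min).trans h_le⟩

theorem exists_retraction_edist_le_mesh {S : Finset X} (hS : mesh S ≠ ∞) :
    ∃ ν : X → X, (∀ q, ν q ∈ S) ∧ (∀ q ∈ S, ν q = q) ∧ ∀ q, edist q (ν q) ≤ mesh S := by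
  classical
  choose ν hν_mem hν_le using exists_mem_edist_le_mesh hS
  refine ⟨fun q => if q ∈ S then q else ν q, fun q => ?_, fun q hq => if_pos hq, fun q => ?_⟩
  all_goals
    dsimp only
    split_ifs with hq
  exacts [hq, hν_mem q, by simp, hν_le q]

theorem compactSpace_of_mesh_ne_top [ProperSpace X] {S : Finset X} (hS : mesh S ≠ ∞) :
    CompactSpace X := by
  rw [← isCompact_univ_iff]
  refine (S.finite_toSet.isCompact_biUnion fun s _ =>
    isCompact_closedBall s (mesh S).toReal).of_isClosed_subset isClosed_univ fun q _ => ?_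
  obtain ⟨s, hs, hqs⟩ := exists_mem_edist_le_mesh hS q
  exact mem_biUnion hs ((dist_edist q s).trans_le (ENNReal.toReal_mono hS hqs))

theorem graphDist_le_sum {S : Finset X} {r : ℝ} {x : ℕ → X} (hx : ∀ i, x i ∈ S)
    (hr : ∀ i, dist (x i) (x (i + 1)) ≤ r) (n : ℕ) :
    graphDist S r (x 0) (x n) ≤ ∑ i ∈ Finset.range n, edist (x i) (x (i + 1)) := by
  rw [Finset.sum_range]
  exact iInf₂_le_of_le n (fun i => x i)
    (iInf_le_of_le ⟨fun i => hx i, rfl, rfl, fun i => hr i⟩ le_rfl)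

theorem mul_intrinsicDist_le_graphDist {c : ℝ≥0∞} {r : ℝ}
    (hc : ∀ q q' : X, dist q q' ≤ r → c * intrinsicDist q q' ≤ edist q q') (S : Finset X)
    (p p' : X) : c * intrinsicDist p p' ≤ graphDist S r p p' := by
  refine le_iInf₂ fun m f => le_iInf ?_
  rintro ⟨-, rfl, rfl, hf⟩
  calc c * intrinsicDist (f 0) (f (Fin.last m))
      ≤ c * ∑ i : Fin m, intrinsicDist (f i.castSucc) (f i.succ) := by
        gcongr
        exact intrinsicDist_le_sum f
    _ = ∑ i : Fin m, c * intrinsicDist (f i.castSucc) (f i.succ) := Finset.mul_sum ..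
    _ ≤ ∑ i : Fin m, edist (f i.castSucc) (f i.succ) :=
        Finset.sum_le_sum fun i _ => hc _ _ (hf i)

theorem graphDist_le_sum_add_mesh {S : Finset X} {r : ℝ} {h : ℝ≥0∞} (hr : 0 ≤ r)
    (hS : h + 2 * mesh S ≤ ENNReal.ofReal r) {x : ℕ → X}
    (hx : ∀ i, edist (x i) (x (i + 1)) ≤ h) {n : ℕ} (hx_zero : x 0 ∈ S) (hx_last : x n ∈ S) :
    graphDist S r (x 0) (x n) ≤
      ∑ i ∈ Finset.range n, edist (x i) (x (i + 1)) + n * (2 * mesh S) := by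
  have hS_top : mesh S ≠ ∞ := by
    rintro h_top
    simp [h_top] at hS
  obtain ⟨ν, hν_mem, hν_fix, hν_le⟩ := exists_retraction_edist_le_mesh hS_top
  have hν_edist (q q' : X) : edist (ν q) (ν q') ≤ edist q q' + 2 * mesh S :=
    calc edist (ν q) (ν q') ≤ edist (ν q) q + edist q q' + edist q' (ν q') := edist_triangle4 ..
      _ ≤ mesh S + edist q q' + mesh S := by
        gcongr
        exacts [edist_comm q (ν q) ▸ hν_le q, hν_le q']
      _ = edist q q' + 2 * mesh S := by ring
  have hν_dist (i : ℕ) : dist (ν (x i)) (ν (x (i + 1))) ≤ r :=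
    (edist_le_ofReal hr).mp ((hν_edist _ _).trans ((add_le_add_left (hx i) _).trans hS))
  calc graphDist S r (x 0) (x n) = graphDist S r (ν (x 0)) (ν (x n)) := by
        rw [hν_fix _ hx_zero, hν_fix _ hx_last]
    _ ≤ ∑ i ∈ Finset.range n, edist (ν (x i)) (ν (x (i + 1))) :=
        graphDist_le_sum (fun i => hν_mem (x i)) hν_dist n
    _ ≤ ∑ i ∈ Finset.range n, (edist (x i) (x (i + 1)) + 2 * mesh S) :=
        Finset.sum_le_sum fun i _ => hν_edist _ _
    _ = ∑ i ∈ Finset.range n, edist (x i) (x (i + 1)) + n * (2 * mesh S) := by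
        simp [Finset.sum_add_distrib]

theorem graphDist_le_pathLength_add {S : Finset X} {r : ℝ} (hr : 0 < r)
    (hS : 4 * mesh S ≤ ENNReal.ofReal r) {γ : ℝ → X} (hγ : ContinuousOn γ (Icc 0 1))
    (hγ_top : pathLength γ ≠ ∞) (hγ_zero : γ 0 ∈ S) (hγ_one : γ 1 ∈ S) :
    graphDist S r (γ 0) (γ 1) ≤ pathLength γ +
      (4 * pathLength γ + 2 * ENNReal.ofReal r) * (mesh S / ENNReal.ofReal r) := by
  set R := ENNReal.ofReal r
  have hR_zero : R ≠ 0 := (ENNReal.ofReal_pos.mpr hr).ne'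
  have hR_top : R ≠ ∞ := ENNReal.ofReal_ne_top
  have h_mesh : R * (mesh S / R) = mesh S := ENNReal.mul_div_cancel hR_zero hR_top
  have h_half : R / 2 + 2 * mesh S ≤ R := by
    have h_two : 2 * mesh S ≤ R / 2 := by
      rw [ENNReal.le_div_iff_mul_le (by simp) (by simp)]
      exact hS.trans_eq' (by ring)
    exact (add_le_add_right h_two _).trans_eq (ENNReal.add_halves R)
  rw [pathLength_eq_eVariationOn] at hγ_top ⊢
  set V := eVariationOn γ (Icc 0 1)
  obtain ⟨n, t, hn, ht_mono, ht_mem, ht_zero, ht_one, ht_step⟩ :=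
    exists_monotone_subdivision_edist_le zero_le_one hγ hγ_top (h := R / 2) (by simpa using hR_zero)
  have hn_mul : n * R ≤ 2 * V :=
    calc n * R = 2 * (n * (R / 2)) := by
          rw [mul_left_comm, ENNReal.mul_div_cancel (by simp) (by simp)]
      _ ≤ 2 * V := by gcongr
  have h_sum : ∑ i ∈ Finset.range (n + 1), edist (γ (t i)) (γ (t (i + 1))) ≤ V := by
    simpa only [edist_comm] using eVariationOn.sum_le (f := γ) (n := n + 1) ht_mono ht_mem
  calc graphDist S r (γ 0) (γ 1) = graphDist S r (γ (t 0)) (γ (t (n + 1))) := by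
        rw [ht_zero, ht_one]
    _ ≤ ∑ i ∈ Finset.range (n + 1), edist (γ (t i)) (γ (t (i + 1))) +
          (n + 1 : ℕ) * (2 * mesh S) :=
        graphDist_le_sum_add_mesh (x := γ ∘ t) hr.le h_half ht_step (by simpa [ht_zero])
          (by simpa [ht_one])
    _ ≤ V + (n + 1 : ℕ) * (2 * mesh S) := by gcongr
    _ = V + (2 * (n * R) + 2 * R) * (mesh S / R) := by
        nth_rw 1 [← h_mesh]
        push_cast
        ring
    _ ≤ V + (2 * (2 * V) + 2 * R) * (mesh S / R) := by gcongr
    _ = V + (4 * V + 2 * R) * (mesh S / R) := by ring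

section Convergence

open scoped Uniformity

theorem eventually_uniformity_mul_intrinsicDist_le_edist [CompactSpace X] (ω : X → X → ℝ)
    (hωcont : Continuous fun z : X × X => ω z.1 z.2) (hω0 : ∀ q, ω q q = 0)
    (hδL : ∀ q q' : X, intrinsicDist q q' ≤ ENNReal.ofReal (dist q q' * (1 + ω q q')))
    (c : ℝ≥0∞) (hc : c < 1) :
    ∀ᶠ z : X × X in 𝓤 X, c * intrinsicDist z.1 z.2 ≤ edist z.1 z.2 := by
  have h_cont : Continuous fun z : X × X => c * ENNReal.ofReal (1 + ω z.1 z.2) :=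
    (ENNReal.continuous_const_mul hc.ne_top).comp (ENNReal.continuous_ofReal.comp (by fun_prop))
  have h_near : ∀ᶠ z : X × X in 𝓤 X, c * ENNReal.ofReal (1 + ω z.1 z.2) < 1 := by
    rw [← nhdsSet_diagonal_eq_uniformity]
    refine (isOpen_lt h_cont continuous_const).mem_nhdsSet.mpr fun z hz => ?_
    rw [mem_diagonal_iff] at hz
    simpa [hz, hω0] using hc
  filter_upwards [h_near] with z hz
  calc c * intrinsicDist z.1 z.2 ≤ c * ENNReal.ofReal (dist z.1 z.2 * (1 + ω z.1 z.2)) := by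
        gcongr
        exact hδL _ _
    _ = edist z.1 z.2 * (c * ENNReal.ofReal (1 + ω z.1 z.2)) := by
        rw [ENNReal.ofReal_mul dist_nonneg, ← edist_dist]
        ring
    _ ≤ edist z.1 z.2 := mul_le_of_le_one_right' hz.le

variable {ι : Type*} {l : Filter ι} {S : ι → Finset X} {r : ι → ℝ} {p p' : X}

theorem intrinsicDist_le_liminf_graphDist
    (hX : ∀ c < 1, ∀ᶠ z : X × X in 𝓤 X, c * intrinsicDist z.1 z.2 ≤ edist z.1 z.2)
    (hr0 : Tendsto r l (𝓝 0)) :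
    intrinsicDist p p' ≤ liminf (fun n => graphDist (S n) (r n) p p') l := by
  refine ENNReal.le_of_forall_lt_one_mul_le fun c hc => ?_
  obtain ⟨ρ, hρ, h_near⟩ := Metric.mem_uniformity_dist.mp (hX c hc)
  refine le_liminf_of_le (by isBoundedDefault) ?_
  filter_upwards [hr0.eventually_lt_const hρ] with n hn
  exact mul_intrinsicDist_le_graphDist (fun q q' hq => h_near (hq.trans_lt hn)) (S n) p p'

theorem limsup_graphDist_le_intrinsicDist (hpS : ∀ n, p ∈ S n) (hp'S : ∀ n, p' ∈ S n)
    (hrpos : ∀ n, 0 < r n) (hr0 : Tendsto r l (𝓝 0))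
    (hratio : Tendsto (fun n => mesh (S n) / ENNReal.ofReal (r n)) l (𝓝 0)) :
    limsup (fun n => graphDist (S n) (r n) p p') l ≤ intrinsicDist p p' := by
  refine le_iInf₂ ?_
  rintro γ ⟨hγ, rfl, rfl⟩
  rcases eq_or_ne (pathLength γ) ∞ with hγ_top | hγ_top
  · exact hγ_top ▸ le_top
  have h_le : ∀ᶠ n in l, graphDist (S n) (r n) (γ 0) (γ 1) ≤ pathLength γ +
      (4 * pathLength γ + 2 * ENNReal.ofReal (r n)) * (mesh (S n) / ENNReal.ofReal (r n)) := by
    filter_upwards [hratio.eventually_lt_const (u := 4⁻¹) (by simp)] with n hn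
    refine graphDist_le_pathLength_add (hrpos n) ?_ hγ hγ_top (hpS n) (hp'S n)
    have h_mesh : mesh (S n) ≤ 4⁻¹ * ENNReal.ofReal (r n) :=
      (ENNReal.div_le_iff (ENNReal.ofReal_pos.mpr (hrpos n)).ne' ENNReal.ofReal_ne_top).mp hn.le
    calc 4 * mesh (S n) ≤ 4 * (4⁻¹ * ENNReal.ofReal (r n)) := by gcongr
      _ = ENNReal.ofReal (r n) := ENNReal.mul_inv_cancel_left (by simp) (by simp)
  have h_lim : Tendsto (fun n => pathLength γ + (4 * pathLength γ + 2 * ENNReal.ofReal (r n)) *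
      (mesh (S n) / ENNReal.ofReal (r n))) l (𝓝 (pathLength γ)) := by
    have hr_lim : Tendsto (fun n => ENNReal.ofReal (r n)) l (𝓝 0) := by
      simpa using ENNReal.tendsto_ofReal hr0
    have h_coef : Tendsto (fun n => 4 * pathLength γ + 2 * ENNReal.ofReal (r n)) l
        (𝓝 (4 * pathLength γ)) := by
      simpa using (ENNReal.Tendsto.const_mul hr_lim (.inr ENNReal.ofNat_ne_top)).const_add
        (4 * pathLength γ)
    simpa using (ENNReal.Tendsto.mul h_coef (.inr ENNReal.zero_ne_top) hratio
      (.inr (ENNReal.mul_ne_top ENNReal.ofNat_ne_top hγ_top))).const_add (pathLength γ)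
  rcases l.eq_or_neBot with rfl | _
  · simp
  · exact (limsup_le_limsup h_le).trans_eq h_lim.limsup_eq

theorem stmt4_general
    (hX : ∀ c < 1, ∀ᶠ z : X × X in 𝓤 X, c * intrinsicDist z.1 z.2 ≤ edist z.1 z.2)
    (hpS : ∀ n, p ∈ S n) (hp'S : ∀ n, p' ∈ S n)
    (hrpos : ∀ n, 0 < r n) (hr0 : Tendsto r l (𝓝 0))
    (hratio : Tendsto (fun n => mesh (S n) / ENNReal.ofReal (r n)) l (𝓝 0)) :
    Tendsto (fun n => graphDist (S n) (r n) p p') l (𝓝 (intrinsicDist p p')) :=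
  tendsto_of_le_liminf_of_limsup_le (intrinsicDist_le_liminf_graphDist hX hr0)
    (limsup_graphDist_le_intrinsicDist hpS hp'S hrpos hr0 hratio)

end Convergence

theorem stmt4 [ProperSpace X]
    (ω : X → X → ℝ) (hωcont : Continuous fun z : X × X => ω z.1 z.2)
    (hω0 : ∀ q, ω q q = 0)
    (hδL : ∀ q q' : X, intrinsicDist q q' = ENNReal.ofReal (dist q q' * (1 + ω q q')))
    (p p' : X) (hfin : intrinsicDist p p' ≠ ∞)
    (S : ℕ → Finset X) (hpS : ∀ n, p ∈ S n) (hp'S : ∀ n, p' ∈ S n)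
    (r : ℕ → ℝ) (hrpos : ∀ n, 0 < r n) (hr0 : Tendsto r atTop (𝓝 0))
    (hmesh : Tendsto (fun n => mesh (S n)) atTop (𝓝 0))
    (hratio : Tendsto (fun n => mesh (S n) / ENNReal.ofReal (r n)) atTop (𝓝 0)) :
    Tendsto (fun n => graphDist (S n) (r n) p p') atTop (𝓝 (intrinsicDist p p')) := by
  obtain ⟨n, hn⟩ := (hmesh.eventually_lt_const ENNReal.zero_lt_top).exists
  have := compactSpace_of_mesh_ne_top hn.ne
  exact stmt4_general (eventually_uniformity_mul_intrinsicDist_le_edist ω hωcont hω0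
    fun q q' => (hδL q q').le) hpS hp'S hrpos hr0 hratio

end Stmt4
end
end

section
/- Let (X, δ) be a proper metric space (every closed ball is compact), and suppose the intrinsic metric δ_L satisfies δ_L(q,q') = δ(q,q')·(1 + ω(q,q')) for all q,q' ∈ X with ω continuous and ω(q,q) = 0. Fix p, p' ∈ X with δ_L(p,p') < ∞. For each n, let S_n ⊂ X be a finite set containing p and p', with ε_n = sup_{q ∈ X} min_{s ∈ S_n} δ(q,s) → 0, and let r_n → 0 with ε_n / r_n → 0. Let δ̂_n : S_n × S_n → ℝ₊ be symmetric functions such that η_n := max_{s ≠ s' ∈ S_n} |δ̂_n(s,s') − δ(s,s')| / δ(s,s') → 0 as n → ∞. Let d̂_n(p,p') be the shortest-path distance between p and p' in the graph with vertex set S_n, edges {(s,s') : δ̂_n(s,s') ≤ r_n}, and edge weights δ̂_n(s,s'). Then d̂_n(p,p') → δ_L(p,p') as n → ∞. -/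
open Filter Set
open scoped ENNReal BigOperators Topology

noncomputable section

namespace Stmt5

variable {X : Type*} [MetricSpace X]

/-- The length of a path `γ : [0,1] → X`: the supremum over partitions
`0 = t₀ < t₁ < ⋯ < t_k = 1` of the sum of distances between consecutive images. -/
def pathLength (γ : ℝ → X) : ℝ≥0∞ :=
  ⨆ (k : ℕ) (t : Fin (k + 1) → ℝ)
    (_ : StrictMono t ∧ t 0 = 0 ∧ t (Fin.last k) = 1),
    ∑ i : Fin k, edist (γ (t i.castSucc)) (γ (t i.succ))

/-- The intrinsic (inner) metric induced by the metric of `X`. -/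
def intrinsicDist (a b : X) : ℝ≥0∞ :=
  ⨅ (γ : ℝ → X) (_ : ContinuousOn γ (Icc 0 1) ∧ γ 0 = a ∧ γ 1 = b), pathLength γ

/-- The mesh `ε = sup_q min_{s ∈ S} δ(q, s)` of a finite set `S` in `X`. -/
def mesh (S : Finset X) : ℝ≥0∞ :=
  ⨆ q : X, ⨅ s ∈ S, edist q s

/-- The shortest-path distance between `a` and `b` in the graph with vertex set `S`,
an edge between `s, s'` whenever `w s s' ≤ r`, and edge weights `w s s'`
(`∞` if `a` and `b` are not connected). -/
def graphDistW (S : Finset X) (w : X → X → ℝ) (r : ℝ) (a b : X) : ℝ≥0∞ :=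
  ⨅ (m : ℕ) (f : Fin (m + 1) → X)
    (_ : (∀ i, f i ∈ S) ∧ f 0 = a ∧ f (Fin.last m) = b ∧
      ∀ i : Fin m, w (f i.castSucc) (f i.succ) ≤ r),
    ∑ i : Fin m, ENNReal.ofReal (w (f i.castSucc) (f i.succ))

open scoped Uniformity

/-!
Compare `graphDistW` with `intrinsicDist` up to factors `K` arbitrarily close to `1`.

From below, an edge of length at most `rₙ` joins two points at distance tending to `0` uniformly,
where the intrinsic and the ambient metric agree up to a factor `K`: this is the continuity of `ω`
on the diagonal, made uniform by compactness of `X`. Summing over the edges with the triangle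
inequality for `intrinsicDist` bounds it by `K²` times the graph distance.

From above, cut a nearly shortest path of length `L` into `O(L / rₙ)` pieces of size about `rₙ / 2`
and move every cut point to a nearest sample. This changes the length by `O(εₙ)` per piece, hence by
`O(L εₙ / rₙ)` in total, which tends to `0`.
-/

theorem eVariationOn_range_of_monotone {α E : Type*} [LinearOrder α] [PseudoEMetricSpace E]
    (f : α → E) {k : ℕ} {t : Fin (k + 1) → α} (ht : Monotone t) :
    eVariationOn f (range t) = ∑ i : Fin k, edist (f (t i.castSucc)) (f (t i.succ)) := by
  let u : ℕ → α := fun i => t (Fin.clamp i k)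
  have hu : Monotone u := fun i j hij => ht (min_le_min_right k hij)
  have hut (i : Fin (k + 1)) : u i = t i :=
    congrArg t (Fin.ext (min_eq_left (Nat.le_of_lt_succ i.isLt)))
  have hrange : range t = u '' Iic k := by
    refine Subset.antisymm ?_ (image_subset_iff.2 fun i _ => mem_range_self _)
    rintro _ ⟨i, rfl⟩
    exact ⟨i, Nat.le_of_lt_succ i.isLt, hut i⟩
  rw [hrange, eVariationOn.image_range_of_monotone f hu, Finset.sum_range]
  refine Finset.sum_congr rfl fun i _ => ?_
  rw [← hut i.castSucc, ← hut i.succ, Fin.val_castSucc, Fin.val_succ]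

theorem eVariationOn_finset_le_pathLength (γ : ℝ → X) {P : Finset ℝ}
    (h0 : IsLeast (P : Set ℝ) 0) (h1 : IsGreatest (P : Set ℝ) 1) :
    eVariationOn γ P ≤ pathLength γ := by
  obtain ⟨k, hk⟩ := Nat.exists_eq_succ_of_ne_zero (Finset.card_ne_zero_of_mem h0.1)
  let t := P.orderEmbOfFin hk
  have ht0 : t 0 = 0 :=
    (Finset.isLeast_min' P _).unique h0 ▸ Finset.orderEmbOfFin_zero hk k.succ_pos
  have ht1 : t (Fin.last k) = 1 :=
    (Finset.isGreatest_max' P _).unique h1 ▸ Finset.orderEmbOfFin_last hk k.succ_pos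
  rw [← Finset.range_orderEmbOfFin P hk, eVariationOn_range_of_monotone γ t.monotone]
  exact le_iSup_of_le k (le_iSup₂_of_le (⇑t) ⟨t.strictMono, ht0, ht1⟩ le_rfl)

theorem pathLength_eq_eVariationOn (γ : ℝ → X) : pathLength γ = eVariationOn γ (Icc 0 1) := by
  refine le_antisymm (iSup_le fun k => iSup₂_le fun t ⟨ht, ht0, ht1⟩ => ?_)
    (iSup_le fun ⟨n, u, hu, hu01⟩ => ?_)
  · rw [← eVariationOn_range_of_monotone γ ht.monotone]
    refine eVariationOn.mono γ (range_subset_iff.2 fun i => ⟨?_, ?_⟩)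
    · exact ht0 ▸ ht.monotone (Fin.zero_le i)
    · exact ht1 ▸ ht.monotone (Fin.le_last i)
  · let P : Finset ℝ := {0, 1} ∪ (Finset.range (n + 1)).image u
    have hP : ∀ x ∈ P, x ∈ Icc (0 : ℝ) 1 := by
      simp only [P, Finset.mem_union, Finset.mem_insert, Finset.mem_singleton, Finset.mem_image]
      rintro x ((rfl | rfl) | ⟨i, -, rfl⟩)
      exacts [left_mem_Icc.2 zero_le_one, right_mem_Icc.2 zero_le_one, hu01 i]
    calc ∑ i ∈ Finset.range n, edist (γ (u (i + 1))) (γ (u i))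
        = eVariationOn γ (u '' Iic n) := by
          simp only [eVariationOn.image_range_of_monotone γ hu, edist_comm]
      _ ≤ eVariationOn γ P := by
          refine eVariationOn.mono γ (image_subset_iff.2 fun i (hi : i ≤ n) => ?_)
          exact Finset.mem_union_right {0, 1}
            (Finset.mem_image_of_mem u (Finset.mem_range.2 (Nat.lt_succ_of_le hi)))
      _ ≤ pathLength γ := eVariationOn_finset_le_pathLength γ
          ⟨by simp [P], fun x hx => (hP x hx).1⟩ ⟨by simp [P], fun x hx => (hP x hx).2⟩

theorem intrinsicDist_le_pathLength {γ : ℝ → X} (hγ : ContinuousOn γ (Icc 0 1)) :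
    intrinsicDist (γ 0) (γ 1) ≤ pathLength γ :=
  iInf₂_le γ ⟨hγ, rfl, rfl⟩

theorem intrinsicDist_self (a : X) : intrinsicDist a a = 0 := by
  have hconst : pathLength (fun _ : ℝ => a) = 0 := by
    rw [pathLength_eq_eVariationOn, eVariationOn.eq_zero_iff]
    exact fun _ _ _ _ => edist_self a
  exact nonpos_iff_eq_zero.1 (hconst ▸ intrinsicDist_le_pathLength continuousOn_const)

/-- The concatenation of two paths parametrized by `[0,1]`, each run at double speed. It is a path
from `γ₁ 0` to `γ₂ 1` when `γ₁ 1 = γ₂ 0`. -/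
def pathConcat {Y : Type*} (γ₁ γ₂ : ℝ → Y) (t : ℝ) : Y :=
  if t ≤ 1 / 2 then γ₁ (2 * t) else γ₂ (2 * t - 1)

section pathConcat

variable {Y : Type*} {γ₁ γ₂ : ℝ → Y}

theorem Icc_zero_half_union_Icc_half_one : Icc (0 : ℝ) (1 / 2) ∪ Icc (1 / 2) 1 = Icc 0 1 :=
  Icc_union_Icc_eq_Icc (by norm_num) (by norm_num)

theorem eqOn_pathConcat_left :
    EqOn (pathConcat γ₁ γ₂) (γ₁ ∘ fun t => 2 * t) (Icc 0 (1 / 2)) :=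
  fun _ ht => if_pos ht.2

theorem eqOn_pathConcat_right (h : γ₁ 1 = γ₂ 0) :
    EqOn (pathConcat γ₁ γ₂) (γ₂ ∘ fun t => 2 * t - 1) (Icc (1 / 2) 1) := by
  intro t ht
  rcases ht.1.eq_or_lt with rfl | hlt
  · simp [pathConcat, h]
  · exact if_neg hlt.not_ge

theorem mapsTo_two_mul : MapsTo (fun t : ℝ => 2 * t) (Icc 0 (1 / 2)) (Icc 0 1) :=
  fun _ ht => ⟨by linarith [ht.1], by linarith [ht.2]⟩

theorem mapsTo_two_mul_sub_one : MapsTo (fun t : ℝ => 2 * t - 1) (Icc (1 / 2) 1) (Icc 0 1) :=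
  fun _ ht => ⟨by linarith [ht.1], by linarith [ht.2]⟩

theorem continuousOn_pathConcat [TopologicalSpace Y] (h : γ₁ 1 = γ₂ 0)
    (hγ₁ : ContinuousOn γ₁ (Icc 0 1)) (hγ₂ : ContinuousOn γ₂ (Icc 0 1)) :
    ContinuousOn (pathConcat γ₁ γ₂) (Icc 0 1) := by
  rw [← Icc_zero_half_union_Icc_half_one]
  refine ContinuousOn.union_of_isClosed ?_ ?_ isClosed_Icc isClosed_Icc
  · exact (hγ₁.comp (by fun_prop) mapsTo_two_mul).congr eqOn_pathConcat_left
  · exact (hγ₂.comp (by fun_prop) mapsTo_two_mul_sub_one).congr (eqOn_pathConcat_right h)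

end pathConcat

theorem pathLength_pathConcat_le {γ₁ γ₂ : ℝ → X} (h : γ₁ 1 = γ₂ 0) :
    pathLength (pathConcat γ₁ γ₂) ≤ pathLength γ₁ + pathLength γ₂ := by
  simp only [pathLength_eq_eVariationOn]
  rw [← Icc_zero_half_union_Icc_half_one,
    eVariationOn.union _ (isGreatest_Icc (by norm_num)) (isLeast_Icc (by norm_num)),
    eVariationOn.congr eqOn_pathConcat_left, eVariationOn.congr (eqOn_pathConcat_right h),
    Icc_zero_half_union_Icc_half_one]
  gcongr
  · exact eVariationOn.comp_le_of_monotoneOn _ _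
      (fun x _ y _ hxy => by linarith) mapsTo_two_mul
  · exact eVariationOn.comp_le_of_monotoneOn _ _
      (fun x _ y _ hxy => by linarith) mapsTo_two_mul_sub_one

theorem intrinsicDist_triangle (a b c : X) :
    intrinsicDist a c ≤ intrinsicDist a b + intrinsicDist b c := by
  conv_rhs => simp only [intrinsicDist, ENNReal.iInf_add]
  refine le_iInf₂ fun γ₁ ⟨hγ₁, h₁0, h₁1⟩ => ?_
  simp only [ENNReal.add_iInf]
  refine le_iInf₂ fun γ₂ ⟨hγ₂, h₂0, h₂1⟩ => ?_
  have hjoin : γ₁ 1 = γ₂ 0 := h₁1.trans h₂0.symm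
  have h0 : pathConcat γ₁ γ₂ 0 = a := by simp [pathConcat, h₁0]
  have h1 : pathConcat γ₁ γ₂ 1 = c := by norm_num [pathConcat, h₂1]
  calc intrinsicDist a c ≤ pathLength (pathConcat γ₁ γ₂) := by
        simpa only [h0, h1] using
          intrinsicDist_le_pathLength (continuousOn_pathConcat hjoin hγ₁ hγ₂)
    _ ≤ pathLength γ₁ + pathLength γ₂ := pathLength_pathConcat_le hjoin

theorem intrinsicDist_le_sum {m : ℕ} (f : Fin (m + 1) → X) :
    intrinsicDist (f 0) (f (Fin.last m)) ≤
      ∑ i : Fin m, intrinsicDist (f i.castSucc) (f i.succ) := by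
  induction m with
  | zero => simp [intrinsicDist_self]
  | succ m ih =>
    rw [Fin.sum_univ_castSucc, ← Fin.succ_last]
    refine (intrinsicDist_triangle _ (f (Fin.last m).castSucc) _).trans ?_
    gcongr
    exact ih fun i => f i.castSucc

section Graph

variable {V : Type*} {S : Finset V} {w : V → V → ℝ} {r : ℝ}

theorem graphDistW_self {a : V} (ha : a ∈ S) : graphDistW S w r a a = 0 := by
  refine nonpos_iff_eq_zero.1 (iInf_le_of_le 0 (iInf₂_le_of_le (fun _ => a) ?_ ?_))
  · exact ⟨fun _ => ha, rfl, rfl, fun i => i.elim0⟩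
  · simp

theorem graphDistW_le_ofReal_add {a b : V} (ha : a ∈ S) (hab : w a b ≤ r) (c : V) :
    graphDistW S w r a c ≤ ENNReal.ofReal (w a b) + graphDistW S w r b c := by
  conv_rhs => simp only [graphDistW, ENNReal.add_iInf]
  refine le_iInf fun m => le_iInf₂ fun f ⟨hfS, hf0, hfm, hfr⟩ => ?_
  refine iInf_le_of_le (m + 1) (iInf₂_le_of_le (Fin.cons (α := fun _ => V) a f) ?_ ?_)
  · refine ⟨Fin.cases ha hfS, rfl, hfm, Fin.cases ?_ hfr⟩
    simpa [hf0] using hab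
  · rw [Fin.sum_univ_succ]
    simp [hf0]

theorem graphDistW_le_sum {s : ℕ → V} {t : ℕ → ℝ≥0∞} {m : ℕ} (hs : ∀ i, s i ∈ S)
    (hst : ∀ i < m, s i ≠ s (i + 1) →
      w (s i) (s (i + 1)) ≤ r ∧ ENNReal.ofReal (w (s i) (s (i + 1))) ≤ t i) :
    graphDistW S w r (s 0) (s m) ≤ ∑ i ∈ Finset.range m, t i := by
  induction m generalizing s t with
  | zero => simp [graphDistW_self (hs 0)]
  | succ m ih =>
    have htail : graphDistW S w r (s 1) (s (m + 1)) ≤ ∑ i ∈ Finset.range m, t (i + 1) :=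
      ih (s := fun i => s (i + 1)) (fun i => hs _) fun i hi => hst (i + 1) (by lia)
    rw [Finset.sum_range_succ', add_comm (∑ i ∈ _, _)]
    by_cases h01 : s 0 = s 1
    · exact h01 ▸ htail.trans le_add_self
    · obtain ⟨hr, ht⟩ := hst 0 m.succ_pos h01
      exact (graphDistW_le_ofReal_add (hs 0) hr _).trans (add_le_add ht htail)

end Graph

theorem intrinsicDist_le_mul_graphDistW {S : Finset X} {w : X → X → ℝ} {r : ℝ} {K : ℝ≥0∞}
    (hK0 : K ≠ 0) (hK : K ≠ ∞)
    (h : ∀ s ∈ S, ∀ s' ∈ S, w s s' ≤ r → intrinsicDist s s' ≤ K * ENNReal.ofReal (w s s'))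
    (a b : X) : intrinsicDist a b ≤ K * graphDistW S w r a b := by
  simp only [graphDistW, ENNReal.mul_iInf_of_ne hK0 hK]
  refine le_iInf fun m => le_iInf₂ fun f ⟨hfS, hf0, hfm, hfr⟩ => ?_
  rw [← hf0, ← hfm, Finset.mul_sum]
  exact (intrinsicDist_le_sum f).trans
    (Finset.sum_le_sum fun i _ => h _ (hfS _) _ (hfS _) (hfr i))

theorem eventually_intrinsicDist_le_mul_graphDistW {ι : Type*} {l : Filter ι}
    {S : ι → Finset X} {w : ι → X → X → ℝ} {r : ι → ℝ} {K : ℝ} (hK : 0 < K)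
    (hX : ∀ᶠ z : X × X in 𝓤 X, intrinsicDist z.1 z.2 ≤ ENNReal.ofReal K * edist z.1 z.2)
    (hr : Tendsto r l (𝓝 0))
    (hw : ∀ᶠ n in l, ∀ s ∈ S n, ∀ s' ∈ S n, dist s s' ≤ K * w n s s') (a b : X) :
    ∀ᶠ n in l, intrinsicDist a b ≤
      ENNReal.ofReal (K * K) * graphDistW (S n) (w n) (r n) a b := by
  obtain ⟨d, hd, hXd⟩ := Metric.mem_uniformity_dist.1 hX
  have hKr : Tendsto (fun n => K * r n) l (𝓝 0) := by simpa using hr.const_mul K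
  filter_upwards [hw, hKr.eventually_lt_const hd] with n hwn hrn
  refine intrinsicDist_le_mul_graphDistW (by simpa using mul_pos hK hK) ENNReal.ofReal_ne_top
    (fun s hs s' hs' hss' => ?_) a b
  have hdist : dist s s' ≤ K * w n s s' := hwn s hs s' hs'
  have hclose : dist s s' < d := (hdist.trans (by gcongr)).trans_lt hrn
  calc intrinsicDist s s' ≤ ENNReal.ofReal K * edist s s' := hXd hclose
    _ ≤ ENNReal.ofReal K * ENNReal.ofReal (K * w n s s') := by
        rw [edist_dist]; gcongr
    _ = ENNReal.ofReal (K * K) * ENNReal.ofReal (w n s s') := by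
        rw [ENNReal.ofReal_mul hK.le, ENNReal.ofReal_mul hK.le, mul_assoc]

theorem exists_edist_lt_of_mesh_lt {S : Finset X} {ε : ℝ≥0∞} (h : mesh S < ε) (q : X) :
    ∃ s ∈ S, edist q s < ε := by
  simpa only [iInf_lt_iff, exists_prop] using
    (le_iSup (fun q => ⨅ s ∈ S, edist q s) q).trans_lt h

theorem exists_mem_Icc_dist_le {γ : ℝ → X} {ρ t b : ℝ} (hρ : 0 ≤ ρ) (htb : t ≤ b)
    (hγ : ContinuousOn γ (Icc t b)) :
    ∃ t' ∈ Icc t b, dist (γ t) (γ t') ≤ ρ ∧ (t' ≠ b → dist (γ t) (γ t') = ρ) := by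
  rcases le_or_gt (dist (γ t) (γ b)) ρ with hle | hlt
  · exact ⟨b, right_mem_Icc.2 htb, hle, fun h => absurd rfl h⟩
  · have hcont : ContinuousOn (fun t' => dist (γ t) (γ t')) (Icc t b) := by fun_prop
    obtain ⟨t', ht', hdist⟩ := intermediate_value_Icc htb hcont
      (show ρ ∈ Icc (dist (γ t) (γ t)) (dist (γ t) (γ b)) from ⟨by simpa using hρ, hlt.le⟩)
    exact ⟨t', ht', hdist.le, fun _ => hdist⟩

/- The subdivision is greedy: every step before the endpoint is reached has length exactly `ρ`, so
there are fewer than `m` such steps. -/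
theorem exists_monotone_dist_le {γ : ℝ → X} {ρ a b : ℝ} {m : ℕ} (hρ : 0 ≤ ρ) (hab : a ≤ b)
    (hγ : ContinuousOn γ (Icc a b)) (hm : eVariationOn γ (Icc a b) < ENNReal.ofReal (m * ρ)) :
    ∃ u : ℕ → ℝ, Monotone u ∧ (∀ i, u i ∈ Icc a b) ∧ u 0 = a ∧ u m = b ∧
      ∀ i, dist (γ (u i)) (γ (u (i + 1))) ≤ ρ := by
  choose! next hnext hle heq using fun t (ht : t ∈ Icc a b) =>
    exists_mem_Icc_dist_le hρ ht.2 (hγ.mono (Icc_subset_Icc_left ht.1))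
  let u : ℕ → ℝ := fun i => next^[i] a
  have hu_succ (i : ℕ) : u (i + 1) = next (u i) := Function.iterate_succ_apply' next i a
  have hu (i : ℕ) : u i ∈ Icc a b := by
    induction i with
    | zero => exact left_mem_Icc.2 hab
    | succ i ih => exact hu_succ i ▸ Icc_subset_Icc_left ih.1 (hnext _ ih)
  have hmono : Monotone u := monotone_nat_of_le_succ fun i => hu_succ i ▸ (hnext _ (hu i)).1
  refine ⟨u, hmono, hu, rfl, ?_, fun i => hu_succ i ▸ hle _ (hu i)⟩
  by_contra hne
  have hstep (i : ℕ) (hi : i < m) : edist (γ (u (i + 1))) (γ (u i)) = ENNReal.ofReal ρ := by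
    have hlt : u (i + 1) < b := (hmono hi).trans_lt (lt_of_le_of_ne (hu m).2 hne)
    rw [edist_comm, edist_dist, hu_succ, heq _ (hu i) (hu_succ i ▸ hlt.ne)]
  refine hm.not_ge ?_
  calc ENNReal.ofReal (m * ρ) = ∑ i ∈ Finset.range m, edist (γ (u (i + 1))) (γ (u i)) := by
        rw [Finset.sum_congr rfl fun i hi => hstep i (Finset.mem_range.1 hi), Finset.sum_const,
          Finset.card_range, nsmul_eq_mul, ENNReal.ofReal_mul m.cast_nonneg, ENNReal.ofReal_natCast]
    _ ≤ eVariationOn γ (Icc a b) := eVariationOn.sum_le hmono hu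

theorem graphDistW_le_of_chain {S : Finset X} {w : X → X → ℝ} {r K ρ e : ℝ} (hK : 0 ≤ K)
    (hr : K * (ρ + 2 * e) ≤ r) (hS : ∀ q : X, ∃ s ∈ S, dist q s ≤ e)
    (hw : ∀ s ∈ S, ∀ s' ∈ S, s ≠ s' → w s s' ≤ K * dist s s') {x : ℕ → X} {m : ℕ}
    (hx : ∀ i, dist (x i) (x (i + 1)) ≤ ρ) (h0 : x 0 ∈ S) (hm : x m ∈ S) :
    graphDistW S w r (x 0) (x m) ≤ ENNReal.ofReal K *
      (∑ i ∈ Finset.range m, edist (x i) (x (i + 1)) + m * ENNReal.ofReal (2 * e)) := by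
  have hproj (q : X) : ∃ s ∈ S, dist q s ≤ e ∧ (q ∈ S → s = q) := by
    obtain ⟨s, hs, hqs⟩ := hS q
    by_cases hq : q ∈ S
    · exact ⟨q, hq, by simpa using dist_nonneg.trans hqs, fun _ => rfl⟩
    · exact ⟨s, hs, hqs, fun h => absurd h hq⟩
  choose proj hprojS hproj_dist hproj_self using hproj
  have he : 0 ≤ e := dist_nonneg.trans (hproj_dist (x 0))
  have hdist (i : ℕ) : dist (proj (x i)) (proj (x (i + 1))) ≤ dist (x i) (x (i + 1)) + 2 * e := by
    have := dist_triangle4 (proj (x i)) (x i) (x (i + 1)) (proj (x (i + 1)))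
    linarith [dist_comm (proj (x i)) (x i), hproj_dist (x i), hproj_dist (x (i + 1))]
  have hedge (i : ℕ) (hne : proj (x i) ≠ proj (x (i + 1))) :
      w (proj (x i)) (proj (x (i + 1))) ≤ K * (dist (x i) (x (i + 1)) + 2 * e) :=
    (hw _ (hprojS _) _ (hprojS _) hne).trans (by gcongr; exact hdist i)
  have hsum : graphDistW S w r (proj (x 0)) (proj (x m)) ≤ ∑ i ∈ Finset.range m,
      ENNReal.ofReal K * (edist (x i) (x (i + 1)) + ENNReal.ofReal (2 * e)) := by
    refine graphDistW_le_sum (s := fun i => proj (x i)) (fun i => hprojS _) fun i _ hne => ⟨?_, ?_⟩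
    · exact (hedge i hne).trans (le_trans (by gcongr; exact hx i) hr)
    · rw [edist_dist, ← ENNReal.ofReal_add dist_nonneg (by positivity), ← ENNReal.ofReal_mul hK]
      exact ENNReal.ofReal_le_ofReal (hedge i hne)
  rw [hproj_self _ h0, hproj_self _ hm] at hsum
  simpa only [← Finset.mul_sum, Finset.sum_add_distrib, Finset.sum_const, Finset.card_range,
    nsmul_eq_mul] using hsum

theorem graphDistW_le_of_path {S : Finset X} {w : X → X → ℝ} {r K ρ e : ℝ} (hK : 0 ≤ K)
    (hρ : 0 < ρ) (hr : K * (ρ + 2 * e) ≤ r) (hS : ∀ q : X, ∃ s ∈ S, dist q s ≤ e)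
    (hw : ∀ s ∈ S, ∀ s' ∈ S, s ≠ s' → w s s' ≤ K * dist s s') {γ : ℝ → X}
    (hγ : ContinuousOn γ (Icc 0 1)) (hfin : pathLength γ ≠ ∞) (h0 : γ 0 ∈ S) (h1 : γ 1 ∈ S) :
    graphDistW S w r (γ 0) (γ 1) ≤ ENNReal.ofReal K *
      (pathLength γ + ENNReal.ofReal (((pathLength γ).toReal / ρ + 1) * (2 * e))) := by
  set L := (pathLength γ).toReal
  let m := ⌊L / ρ⌋₊ + 1
  have hmL : L < m * ρ := by
    rw [← div_lt_iff₀ hρ]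
    exact_mod_cast Nat.lt_floor_add_one (L / ρ)
  have hm : (m : ℝ) ≤ L / ρ + 1 := by
    simpa [m] using Nat.floor_le (div_nonneg ENNReal.toReal_nonneg hρ.le)
  have hvar : eVariationOn γ (Icc 0 1) < ENNReal.ofReal (m * ρ) := by
    rw [← pathLength_eq_eVariationOn]
    exact (ENNReal.lt_ofReal_iff_toReal_lt hfin).2 hmL
  obtain ⟨u, hmono, hu01, hu0, hum, hu⟩ := exists_monotone_dist_le hρ.le zero_le_one hγ hvar
  have hchain := graphDistW_le_of_chain hK hr hS hw (x := γ ∘ u) (m := m) hu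
    (by simpa [hu0] using h0) (by simpa [hum] using h1)
  simp only [Function.comp_apply, hu0, hum] at hchain
  have he : 0 ≤ e := (hS (γ 0)).elim fun s hs => dist_nonneg.trans hs.2
  refine hchain.trans ?_
  gcongr
  · rw [pathLength_eq_eVariationOn]
    simpa only [edist_comm] using eVariationOn.sum_le (f := γ) (n := m) hmono hu01
  · rw [← ENNReal.ofReal_natCast, ← ENNReal.ofReal_mul m.cast_nonneg]
    gcongr

theorem eventually_graphDistW_le {ι : Type*} {l : Filter ι} {S : ι → Finset X}
    {w : ι → X → X → ℝ} {r : ι → ℝ} {K δ : ℝ} (hK : 0 < K) (hδ : 0 < δ)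
    (hrpos : ∀ n, 0 < r n) (hr : Tendsto r l (𝓝 0))
    (hratio : Tendsto (fun n => mesh (S n) / ENNReal.ofReal (r n)) l (𝓝 0))
    (hw : ∀ᶠ n in l, ∀ s ∈ S n, ∀ s' ∈ S n, s ≠ s' → w n s s' ≤ K * dist s s') {γ : ℝ → X}
    (hγ : ContinuousOn γ (Icc 0 1)) (hfin : pathLength γ ≠ ∞)
    (h0 : ∀ n, γ 0 ∈ S n) (h1 : ∀ n, γ 1 ∈ S n) :
    ∀ᶠ n in l, graphDistW (S n) (w n) (r n) (γ 0) (γ 1) ≤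
      ENNReal.ofReal K * (pathLength γ + ENNReal.ofReal δ) := by
  set L := (pathLength γ).toReal
  have : 0 ≤ L := ENNReal.toReal_nonneg
  obtain ⟨κ, hκ, hκK, hκδ⟩ : ∃ κ > 0, 4 * K * κ ≤ 1 ∧ κ * (4 * K * L + 2) ≤ δ := by
    refine ⟨min (1 / (4 * K)) (δ / (4 * K * L + 2)), by positivity, ?_, ?_⟩
    · rw [mul_comm, ← le_div_iff₀ (by positivity)]
      exact min_le_left _ _
    · rw [← le_div_iff₀ (by positivity)]
      exact min_le_right _ _
  have hratio_lt := hratio.eventually_lt_const (ENNReal.ofReal_pos.2 hκ)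
  filter_upwards [hw, hr.eventually_lt_const one_pos, hratio_lt] with n hwn hrn hmesh
  have hrp := hrpos n
  have hnet (q : X) : ∃ s ∈ S n, dist q s ≤ κ * r n := by
    have hlt : mesh (S n) < ENNReal.ofReal (κ * r n) := by
      rw [ENNReal.ofReal_mul hκ.le]
      exact (ENNReal.div_lt_iff (.inl (ENNReal.ofReal_pos.2 hrp).ne')
        (.inl ENNReal.ofReal_ne_top)).1 hmesh
    obtain ⟨s, hs, hqs⟩ := exists_edist_lt_of_mesh_lt hlt q
    exact ⟨s, hs, (edist_le_ofReal (by positivity)).1 hqs.le⟩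
  have hedge : K * (r n / (2 * K) + 2 * (κ * r n)) ≤ r n := by
    have : K * (r n / (2 * K)) = r n / 2 := by field_simp
    nlinarith
  refine (graphDistW_le_of_path hK.le (by positivity) hedge hnet hwn hγ hfin (h0 n) (h1 n)).trans ?_
  gcongr
  calc (L / (r n / (2 * K)) + 1) * (2 * (κ * r n)) = κ * (4 * K * L + 2 * r n) := by
        field_simp; ring
    _ ≤ κ * (4 * K * L + 2) := by gcongr; linarith
    _ ≤ δ := hκδ

theorem eventually_dist_le_mul_and_le_mul_dist {ι : Type*} {l : Filter ι} {S : ι → Finset X}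
    {w : ι → X → X → ℝ} {η : ι → ℝ} (hη : Tendsto η l (𝓝 0))
    (hw : ∀ n, ∀ s ∈ S n, ∀ s' ∈ S n, s ≠ s' → |w n s s' - dist s s'| ≤ η n * dist s s')
    {K : ℝ} (hK : 1 < K) :
    ∀ᶠ n in l, ∀ s ∈ S n, ∀ s' ∈ S n, s ≠ s' →
      dist s s' ≤ K * w n s s' ∧ w n s s' ≤ K * dist s s' := by
  have hK0 : 0 < K := one_pos.trans hK
  have hlower : 0 < 1 - K⁻¹ := sub_pos.2 (inv_lt_one_of_one_lt₀ hK)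
  filter_upwards [hη.eventually_lt_const hlower, hη.eventually_lt_const (sub_pos.2 hK)]
    with n hn hn' s hs s' hs' hne
  obtain ⟨h₁, h₂⟩ := abs_le.1 (hw n s hs s' hs' hne)
  have hle : η n * dist s s' ≤ (1 - K⁻¹) * dist s s' := by gcongr
  have hle' : η n * dist s s' ≤ (K - 1) * dist s s' := by gcongr
  refine ⟨?_, by linarith⟩
  rw [← inv_mul_le_iff₀ hK0]
  linarith

theorem compactSpace_of_tendsto_mesh [CompleteSpace X] {ι : Type*} {l : Filter ι} [l.NeBot]
    {S : ι → Finset X} (hmesh : Tendsto (fun n => mesh (S n)) l (𝓝 0)) : CompactSpace X := by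
  have htb : TotallyBounded (univ : Set X) := by
    refine Metric.totallyBounded_iff.2 fun ε hε => ?_
    obtain ⟨n, hn⟩ := (hmesh.eventually_lt_const (ENNReal.ofReal_pos.2 hε)).exists
    refine ⟨S n, (S n).finite_toSet, fun q _ => ?_⟩
    obtain ⟨s, hs, hqs⟩ := exists_edist_lt_of_mesh_lt hn q
    exact mem_iUnion₂.2 ⟨s, hs, edist_lt_ofReal.1 hqs⟩
  exact ⟨isCompact_iff_totallyBounded_isComplete.2 ⟨htb, isComplete_univ⟩⟩

theorem eventually_intrinsicDist_le_mul_edist [CompactSpace X] {ω : X → X → ℝ}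
    (hω : Continuous fun z : X × X => ω z.1 z.2) (hω0 : ∀ q, ω q q = 0)
    (hδ : ∀ q q' : X, intrinsicDist q q' = ENNReal.ofReal (dist q q' * (1 + ω q q')))
    {K : ℝ} (hK : 1 < K) :
    ∀ᶠ z : X × X in 𝓤 X, intrinsicDist z.1 z.2 ≤ ENNReal.ofReal K * edist z.1 z.2 := by
  have hωK : ∀ᶠ z : X × X in 𝓤 X, ω z.1 z.2 < K - 1 := by
    rw [← nhdsSet_diagonal_eq_uniformity, eventually_nhdsSet_iff_forall]
    rintro ⟨q, _⟩ ⟨⟩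
    exact hω.continuousAt.eventually_lt_const (by simpa [hω0] using hK)
  filter_upwards [hωK] with z hz
  rw [hδ, edist_dist, ← ENNReal.ofReal_mul (one_pos.trans hK).le, mul_comm K]
  gcongr
  linarith

theorem exists_one_lt_ofReal_mul_self_mul_lt {a b : ℝ≥0∞} (hab : a < b) :
    ∃ K : ℝ, 1 < K ∧ ENNReal.ofReal (K * K) * a < b := by
  have hlim : Tendsto (fun K : ℝ => ENNReal.ofReal (K * K) * a) (𝓝[>] 1) (𝓝 a) := by
    have hK : Tendsto (fun K : ℝ => K * K) (𝓝[>] 1) (𝓝 (1 * 1)) :=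
      tendsto_nhdsWithin_of_tendsto_nhds (tendsto_id.mul tendsto_id)
    simpa using ENNReal.Tendsto.mul_const (ENNReal.tendsto_ofReal hK) (.inr hab.ne_top)
  exact (eventually_mem_nhdsWithin.and (hlim.eventually_lt_const hab)).exists

theorem exists_one_lt_ofReal_mul_add_lt {a b : ℝ≥0∞} (hab : a < b) :
    ∃ K : ℝ, 1 < K ∧ ENNReal.ofReal K * (a + ENNReal.ofReal (K - 1)) < b := by
  have hlim : Tendsto (fun K : ℝ => ENNReal.ofReal K * (a + ENNReal.ofReal (K - 1))) (𝓝[>] 1)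
      (𝓝 a) := by
    have hK : Tendsto (fun K : ℝ => K) (𝓝[>] 1) (𝓝 1) :=
      tendsto_nhdsWithin_of_tendsto_nhds tendsto_id
    have hK' : Tendsto (fun K : ℝ => a + ENNReal.ofReal (K - 1)) (𝓝[>] 1) (𝓝 a) := by
      simpa using (ENNReal.tendsto_ofReal (hK.sub_const 1)).const_add a
    simpa using ENNReal.Tendsto.mul (ENNReal.tendsto_ofReal hK) (.inr hab.ne_top) hK'
      (.inr ENNReal.ofReal_ne_top)
  exact (eventually_mem_nhdsWithin.and (hlim.eventually_lt_const hab)).exists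

theorem stmt5_general {ι : Type*} {l : Filter ι}
    (hX : ∀ K : ℝ, 1 < K →
      ∀ᶠ z : X × X in 𝓤 X, intrinsicDist z.1 z.2 ≤ ENNReal.ofReal K * edist z.1 z.2)
    (p p' : X) (S : ι → Finset X) (hpS : ∀ n, p ∈ S n) (hp'S : ∀ n, p' ∈ S n)
    (r : ι → ℝ) (hrpos : ∀ n, 0 < r n) (hr0 : Tendsto r l (𝓝 0))
    (hratio : Tendsto (fun n => mesh (S n) / ENNReal.ofReal (r n)) l (𝓝 0))
    (dh : ι → X → X → ℝ) (hdh_nonneg : ∀ n, ∀ s ∈ S n, ∀ s' ∈ S n, 0 ≤ dh n s s')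
    (η : ι → ℝ) (hη : Tendsto η l (𝓝 0))
    (herr : ∀ n, ∀ s ∈ S n, ∀ s' ∈ S n, s ≠ s' →
      |dh n s s' - dist s s'| ≤ η n * dist s s') :
    Tendsto (fun n => graphDistW (S n) (dh n) (r n) p p') l (𝓝 (intrinsicDist p p')) := by
  refine tendsto_order.2 ⟨fun a ha => ?_, fun a ha => ?_⟩
  · obtain ⟨K, hK, hKa⟩ := exists_one_lt_ofReal_mul_self_mul_lt ha
    have hK0 : 0 < K := one_pos.trans hK
    have hdist : ∀ᶠ n in l, ∀ s ∈ S n, ∀ s' ∈ S n, dist s s' ≤ K * dh n s s' := by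
      filter_upwards [eventually_dist_le_mul_and_le_mul_dist hη herr hK] with n hn s hs s' hs'
      rcases eq_or_ne s s' with rfl | hne
      · simpa using mul_nonneg hK0.le (hdh_nonneg n s hs s hs)
      · exact (hn s hs s' hs' hne).1
    filter_upwards [eventually_intrinsicDist_le_mul_graphDistW hK0 (hX K hK) hr0 hdist p p']
      with n hn
    exact lt_of_mul_lt_mul_left' (hKa.trans_le hn)
  · obtain ⟨γ, ⟨hγ, rfl, rfl⟩, hlt⟩ :
        ∃ γ : ℝ → X, ∃ _ : ContinuousOn γ (Icc 0 1) ∧ γ 0 = p ∧ γ 1 = p', pathLength γ < a := by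
      simpa only [intrinsicDist, iInf_lt_iff] using ha
    obtain ⟨K, hK, hKa⟩ := exists_one_lt_ofReal_mul_add_lt hlt
    have hdist := (eventually_dist_le_mul_and_le_mul_dist hη herr hK).mono
      fun n hn s hs s' hs' hne => (hn s hs s' hs' hne).2
    filter_upwards [eventually_graphDistW_le (one_pos.trans hK) (sub_pos.2 hK) hrpos hr0 hratio
      hdist hγ hlt.ne_top hpS hp'S] with n hn
    exact hn.trans_lt hKa

theorem stmt5 [ProperSpace X]
    (ω : X → X → ℝ) (hωcont : Continuous fun z : X × X => ω z.1 z.2)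
    (hω0 : ∀ q, ω q q = 0)
    (hδL : ∀ q q' : X, intrinsicDist q q' = ENNReal.ofReal (dist q q' * (1 + ω q q')))
    (p p' : X) (hfin : intrinsicDist p p' ≠ ∞)
    (S : ℕ → Finset X) (hpS : ∀ n, p ∈ S n) (hp'S : ∀ n, p' ∈ S n)
    (r : ℕ → ℝ) (hrpos : ∀ n, 0 < r n) (hr0 : Tendsto r atTop (𝓝 0))
    (hmesh : Tendsto (fun n => mesh (S n)) atTop (𝓝 0))
    (hratio : Tendsto (fun n => mesh (S n) / ENNReal.ofReal (r n)) atTop (𝓝 0))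
    -- the estimated dissimilarities δ̂ₙ on `S n`
    (dh : ℕ → X → X → ℝ)
    (hdh_symm : ∀ n, ∀ s ∈ S n, ∀ s' ∈ S n, dh n s s' = dh n s' s)
    (hdh_nonneg : ∀ n, ∀ s ∈ S n, ∀ s' ∈ S n, 0 ≤ dh n s s')
    -- uniform relative consistency: `max_{s ≠ s'} |δ̂ₙ(s,s') − δ(s,s')| / δ(s,s') → 0`
    (η : ℕ → ℝ) (hη : Tendsto η atTop (𝓝 0))
    (herr : ∀ n, ∀ s ∈ S n, ∀ s' ∈ S n, s ≠ s' →
      |dh n s s' - dist s s'| ≤ η n * dist s s') :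
    Tendsto (fun n => graphDistW (S n) (dh n) (r n) p p') atTop
      (𝓝 (intrinsicDist p p')) := by
  have := compactSpace_of_tendsto_mesh hmesh
  exact stmt5_general (fun _ => eventually_intrinsicDist_le_mul_edist hωcont hω0 hδL) p p' S hpS
    hp'S r hrpos hr0 hratio dh hdh_nonneg η hη herr

end Stmt5
end
end

section
/- Let P be a Borel probability measure on an interval (a₁,a₂) ⊆ ℝ with a Lebesgue density f, and let θ, θ₀ : (a₁,a₂) → (b₁,b₂) be strictly increasing continuous bijections onto an interval (b₁,b₂) ⊆ ℝ such that ∫ θ(x)² f(x) dx < ∞ and ∫ θ₀(x)² f(x) dx < ∞. Then the squared Wasserstein distance between the pushforward measures satisfies W₂( θ_* P, (θ₀)_* P )² = ∫ ( θ(x) − θ₀(x) )² f(x) dx. -/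
/-
Integrating the indicators `1[x ≤ r < y] 1[x ≤ s < y]` over `r` and `s` gives `((y - x)⁺)²`, so the
one-sided cost `∫ ((y - x)⁺)² dπ` is the integral over `(r, s)` of the `π`-measures of the
quadrants `{x ≤ min r s, max r s < y}`. For any coupling `π` of the laws of `u` and `v` the
quadrant `{x ≤ a, b < y}` has measure at least `P(u ≤ a) - P(v ≤ b)`, truncated at zero. For the
law of `(u, v)` this is an equality when `u` and `v` are comonotone, because the sublevel sets
`{u ≤ a}` and `{v ≤ b}` are then nested. So the law of `(u, v)` minimizes both one-sided costs.
-/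

open MeasureTheory Set
open scoped ENNReal

noncomputable section

namespace Stmt16

/-- The squared Wasserstein distance `W₂(μ, ν)²` between two Borel measures on `ℝ`:
the infimum over couplings of the expected squared distance. -/
def W2sq (μ ν : Measure ℝ) : ℝ≥0∞ :=
  ⨅ (π : Measure (ℝ × ℝ)) (_ : π.map Prod.fst = μ ∧ π.map Prod.snd = ν),
    ∫⁻ z, edist z.1 z.2 ^ 2 ∂π

section Quadrants

variable {Ω α β : Type*} [MeasurableSpace Ω] [MeasurableSpace α] [MeasurableSpace β]

theorem measure_sdiff_of_ae_le {μ : Measure Ω} {s t : Set Ω} (h : t ≤ᵐ[μ] s)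
    (ht : NullMeasurableSet t μ) (ht_fin : μ t ≠ ∞) : μ (s \ t) = μ s - μ t := by
  rw [← union_sdiff_right, measure_sdiff subset_union_right ht ht_fin,
    measure_congr (union_ae_eq_left_iff_ae_subset.2 h)]

theorem fst_sub_snd_le_prod_compl (π : Measure (α × β)) {s : Set α} {t : Set β}
    (hs : MeasurableSet s) (ht : MeasurableSet t) : π.fst s - π.snd t ≤ π (s ×ˢ tᶜ) := by
  rw [Measure.fst_apply hs, Measure.snd_apply ht]
  exact le_measure_sdiff

theorem monovaryOn_sublevel_nested {ι γ δ : Type*} [Preorder γ] [LinearOrder δ] {u : ι → γ}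
    {v : ι → δ} {S : Set ι} (huv : MonovaryOn u v S) (a : γ) (b : δ) :
    (∀ x ∈ S, u x ≤ a → v x ≤ b) ∨ ∀ x ∈ S, v x ≤ b → u x ≤ a := by
  refine or_iff_not_imp_left.2 fun h x hx hvx => ?_
  push Not at h
  obtain ⟨y, hy, huy, hvy⟩ := h
  exact (huv hx hy (hvx.trans_lt hvy)).trans huy

theorem map_prodMk_Iic_prod_Ioi_of_monovaryOn
    [Preorder α] [TopologicalSpace α] [ClosedIicTopology α] [OpensMeasurableSpace α]
    [LinearOrder β] [TopologicalSpace β] [ClosedIicTopology β] [OpensMeasurableSpace β]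
    {P : Measure Ω} [IsFiniteMeasure P] {u : Ω → α} {v : Ω → β} {S : Set Ω}
    (hu : AEMeasurable u P) (hv : AEMeasurable v P) (hS : ∀ᵐ x ∂P, x ∈ S)
    (huv : MonovaryOn u v S) (a : α) (b : β) :
    P.map (fun x => (u x, v x)) (Iic a ×ˢ Ioi b) = P.map u (Iic a) - P.map v (Iic b) := by
  rw [← compl_Iic, Measure.map_apply_of_aemeasurable (hu.prodMk hv)
      (measurableSet_Iic.prod measurableSet_Iic.compl),
    Measure.map_apply_of_aemeasurable hu measurableSet_Iic,
    Measure.map_apply_of_aemeasurable hv measurableSet_Iic]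
  change P (u ⁻¹' Iic a \ v ⁻¹' Iic b) = _
  rcases monovaryOn_sublevel_nested huv a b with h | h
  · have hle : u ⁻¹' Iic a ≤ᵐ[P] v ⁻¹' Iic b := hS.mono h
    rw [ae_le_set.1 hle, tsub_eq_zero_of_le (measure_mono_ae hle)]
  · exact measure_sdiff_of_ae_le (hS.mono h) (hv.nullMeasurable measurableSet_Iic)
      (measure_ne_top _ _)

end Quadrants

section OneSidedCost

theorem lintegral_ofReal_sub_sq_eq_lintegral_quadrant (π : Measure (ℝ × ℝ)) [SFinite π] :
    ∫⁻ z, ENNReal.ofReal (z.2 - z.1) ^ 2 ∂π =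
      ∫⁻ p : ℝ × ℝ, π (Iic (min p.1 p.2) ×ˢ Ioi (max p.1 p.2)) := by
  let E : Set ((ℝ × ℝ) × (ℝ × ℝ)) :=
    {q | q.1.1 ≤ min q.2.1 q.2.2} ∩ {q | max q.2.1 q.2.2 < q.1.2}
  have hE : MeasurableSet E :=
    (measurableSet_le (by fun_prop) (by fun_prop)).inter
      (measurableSet_lt (by fun_prop) (by fun_prop))
  have section_eq (z : ℝ × ℝ) : Prod.mk z ⁻¹' E = Ico z.1 z.2 ×ˢ Ico z.1 z.2 := by
    ext p
    simp only [E, mem_preimage, mem_inter_iff, mem_ofPred_eq, mem_prod, mem_Ico, le_min_iff,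
      max_lt_iff]
    tauto
  calc ∫⁻ z, ENNReal.ofReal (z.2 - z.1) ^ 2 ∂π
      = ∫⁻ z, volume (Prod.mk z ⁻¹' E) ∂π := by
        simp only [section_eq, Measure.volume_eq_prod, Measure.prod_prod, Real.volume_Ico, sq]
    _ = π.prod volume E := (Measure.prod_apply hE).symm
    _ = ∫⁻ p : ℝ × ℝ, π (Iic (min p.1 p.2) ×ˢ Ioi (max p.1 p.2)) := Measure.prod_apply_symm hE

variable {Ω : Type*} [MeasurableSpace Ω] {P : Measure Ω} {u v : Ω → ℝ}

theorem lintegral_ofReal_sub_sq_le_of_monovaryOn [IsFiniteMeasure P] {S : Set Ω}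
    (hu : AEMeasurable u P) (hv : AEMeasurable v P) (hS : ∀ᵐ x ∂P, x ∈ S)
    (huv : MonovaryOn u v S) {π : Measure (ℝ × ℝ)}
    (hπu : π.fst = P.map u) (hπv : π.snd = P.map v) :
    ∫⁻ x, ENNReal.ofReal (v x - u x) ^ 2 ∂P ≤ ∫⁻ z, ENNReal.ofReal (z.2 - z.1) ^ 2 ∂π := by
  have : IsFiniteMeasure (π.map Prod.fst) := by
    rw [← Measure.fst, hπu]
    infer_instance
  have : IsFiniteMeasure π := Measure.isFiniteMeasure_of_map measurable_fst.aemeasurable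
  have quadrant_le (a b : ℝ) :
      P.map (fun x => (u x, v x)) (Iic a ×ˢ Ioi b) ≤ π (Iic a ×ˢ Ioi b) := by
    rw [map_prodMk_Iic_prod_Ioi_of_monovaryOn hu hv hS huv, ← hπu, ← hπv, ← compl_Iic]
    exact fst_sub_snd_le_prod_compl π measurableSet_Iic measurableSet_Iic
  calc ∫⁻ x, ENNReal.ofReal (v x - u x) ^ 2 ∂P
      = ∫⁻ z, ENNReal.ofReal (z.2 - z.1) ^ 2 ∂P.map fun x => (u x, v x) :=
        (lintegral_map' (f := fun z : ℝ × ℝ => ENNReal.ofReal (z.2 - z.1) ^ 2) (by fun_prop)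
          (hu.prodMk hv)).symm
    _ ≤ ∫⁻ z, ENNReal.ofReal (z.2 - z.1) ^ 2 ∂π := by
        simp only [lintegral_ofReal_sub_sq_eq_lintegral_quadrant]
        exact lintegral_mono fun p => quadrant_le _ _

end OneSidedCost

section Wasserstein

variable {Ω : Type*} [MeasurableSpace Ω] {P : Measure Ω} {u v : Ω → ℝ}

theorem edist_sq_eq_ofReal_sub_sq_add (x y : ℝ) :
    edist x y ^ 2 = ENNReal.ofReal (y - x) ^ 2 + ENNReal.ofReal (x - y) ^ 2 := by
  rw [edist_dist, Real.dist_eq]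
  rcases le_total x y with h | h
  · simp [abs_of_nonpos (sub_nonpos.2 h), ENNReal.ofReal_of_nonpos (sub_nonpos.2 h)]
  · simp [abs_of_nonneg (sub_nonneg.2 h), ENNReal.ofReal_of_nonpos (sub_nonpos.2 h)]

theorem W2sq_map_le_lintegral (hu : AEMeasurable u P) (hv : AEMeasurable v P) :
    W2sq (P.map u) (P.map v) ≤ ∫⁻ x, edist (u x) (v x) ^ 2 ∂P := by
  rw [← lintegral_map' (f := fun z : ℝ × ℝ => edist z.1 z.2 ^ 2) (by fun_prop) (hu.prodMk hv)]
  exact iInf₂_le (P.map fun x => (u x, v x))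
    ⟨Measure.fst_map_prodMk₀ hv, Measure.snd_map_prodMk₀ hu⟩

theorem lintegral_le_W2sq_map_of_monovaryOn [IsFiniteMeasure P] {S : Set Ω}
    (hu : AEMeasurable u P) (hv : AEMeasurable v P) (hS : ∀ᵐ x ∂P, x ∈ S)
    (huv : MonovaryOn u v S) :
    ∫⁻ x, edist (u x) (v x) ^ 2 ∂P ≤ W2sq (P.map u) (P.map v) := by
  refine le_iInf₂ fun π ⟨hπu, hπv⟩ => ?_
  have forward := lintegral_ofReal_sub_sq_le_of_monovaryOn hu hv hS huv hπu hπv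
  have backward : ∫⁻ x, ENNReal.ofReal (u x - v x) ^ 2 ∂P ≤
      ∫⁻ z, ENNReal.ofReal (z.1 - z.2) ^ 2 ∂π := by
    have h := lintegral_ofReal_sub_sq_le_of_monovaryOn hv hu hS huv.symm
      (Measure.fst_map_swap.trans hπv) (Measure.snd_map_swap.trans hπu)
    rwa [lintegral_map (by fun_prop) measurable_swap] at h
  simp only [edist_sq_eq_ofReal_sub_sq_add]
  rw [lintegral_add_left' (by fun_prop), lintegral_add_left' (by fun_prop)]
  exact add_le_add forward backward

theorem stmt16_general [IsFiniteMeasure P] {S : Set Ω}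
    (hu : AEMeasurable u P) (hv : AEMeasurable v P) (hS : ∀ᵐ x ∂P, x ∈ S)
    (huv : MonovaryOn u v S) :
    W2sq (P.map u) (P.map v) = ∫⁻ x, edist (u x) (v x) ^ 2 ∂P :=
  (W2sq_map_le_lintegral hu hv).antisymm (lintegral_le_W2sq_map_of_monovaryOn hu hv hS huv)

end Wasserstein

section Density

variable {Ω : Type*} [MeasurableSpace Ω] {μ : Measure Ω} {f u v : Ω → ℝ}

theorem ae_mem_withDensity_ofReal {S : Set Ω} (hf : Measurable f) (hfS : ∀ x ∉ S, f x = 0) :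
    ∀ᵐ x ∂μ.withDensity fun x => ENNReal.ofReal (f x), x ∈ S := by
  refine (ae_withDensity_iff hf.ennreal_ofReal).2 (ae_of_all _ fun x hx => ?_)
  by_contra hxS
  simp [hfS x hxS] at hx

theorem integral_withDensity_ofReal (hf : Measurable f) (hf0 : ∀ x, 0 ≤ f x) (g : Ω → ℝ) :
    ∫ x, g x ∂μ.withDensity (fun x => ENNReal.ofReal (f x)) = ∫ x, g x * f x ∂μ := by
  rw [integral_withDensity_eq_integral_toReal_smul hf.ennreal_ofReal
    (ae_of_all _ fun _ => ENNReal.ofReal_lt_top)]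
  simp only [ENNReal.toReal_ofReal (hf0 _), smul_eq_mul, mul_comm]

theorem memLp_two_withDensity_ofReal (hf : Measurable f) (hf0 : ∀ x, 0 ≤ f x)
    (hu : Measurable u) (hu2 : Integrable (fun x => u x ^ 2 * f x) μ) :
    MemLp u 2 (μ.withDensity fun x => ENNReal.ofReal (f x)) := by
  rw [memLp_two_iff_integrable_sq hu.aestronglyMeasurable,
    integrable_withDensity_iff hf.ennreal_ofReal (ae_of_all _ fun _ => ENNReal.ofReal_lt_top)]
  simpa only [ENNReal.toReal_ofReal (hf0 _)] using hu2

theorem lintegral_edist_sq_eq_ofReal_integral (hu : MemLp u 2 μ) (hv : MemLp v 2 μ) :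
    ∫⁻ x, edist (u x) (v x) ^ 2 ∂μ = ENNReal.ofReal (∫ x, (u x - v x) ^ 2 ∂μ) := by
  have hint : Integrable (fun x => (u x - v x) ^ 2) μ := (hu.sub hv).integrable_sq
  rw [ofReal_integral_eq_lintegral_ofReal hint (ae_of_all _ fun _ => sq_nonneg _)]
  refine lintegral_congr fun x => ?_
  rw [edist_dist, Real.dist_eq, ← ENNReal.ofReal_pow (abs_nonneg _), sq_abs]

theorem lintegral_edist_sq_withDensity_ofReal (hf : Measurable f) (hf0 : ∀ x, 0 ≤ f x)
    (hu : Measurable u) (hv : Measurable v) (hu2 : Integrable (fun x => u x ^ 2 * f x) μ)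
    (hv2 : Integrable (fun x => v x ^ 2 * f x) μ) :
    ∫⁻ x, edist (u x) (v x) ^ 2 ∂μ.withDensity (fun x => ENNReal.ofReal (f x)) =
      ENNReal.ofReal (∫ x, (u x - v x) ^ 2 * f x ∂μ) := by
  rw [lintegral_edist_sq_eq_ofReal_integral (memLp_two_withDensity_ofReal hf hf0 hu hu2)
    (memLp_two_withDensity_ofReal hf hf0 hv hv2), integral_withDensity_ofReal hf hf0]

end Density

/-- For a probability measure `P` on an open interval `S` with Lebesgue density `f`, and two
strictly increasing continuous bijections `θ, θ₀` from `S` onto an open interval `T`, with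
finite second moments, the squared Wasserstein distance between the pushforwards is the
weighted `L²` distance: `W₂(θ_*P, (θ₀)_*P)² = ∫ (θ(x) − θ₀(x))² f(x) dx`. -/
theorem stmt16 (S T : Set ℝ) (hSopen : IsOpen S) (hSconn : S.OrdConnected)
    (hTopen : IsOpen T) (hTconn : T.OrdConnected)
    (f : ℝ → ℝ) (hfmeas : Measurable f) (hf0 : ∀ x, 0 ≤ f x)
    (hfS : ∀ x ∉ S, f x = 0)
    (hP : IsProbabilityMeasure (volume.withDensity fun x => ENNReal.ofReal (f x)))
    (θ θ₀ : ℝ → ℝ) (hθmeas : Measurable θ) (hθ₀meas : Measurable θ₀)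
    (hθmono : StrictMonoOn θ S) (hθ₀mono : StrictMonoOn θ₀ S)
    (hθcont : ContinuousOn θ S) (hθ₀cont : ContinuousOn θ₀ S)
    (hθonto : θ '' S = T) (hθ₀onto : θ₀ '' S = T)
    (hθmom : Integrable fun x => θ x ^ 2 * f x)
    (hθ₀mom : Integrable fun x => θ₀ x ^ 2 * f x) :
    W2sq ((volume.withDensity fun x => ENNReal.ofReal (f x)).map θ)
        ((volume.withDensity fun x => ENNReal.ofReal (f x)).map θ₀) =
      ENNReal.ofReal (∫ x, (θ x - θ₀ x) ^ 2 * f x) := by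
  rw [stmt16_general hθmeas.aemeasurable hθ₀meas.aemeasurable (ae_mem_withDensity_ofReal hfmeas hfS)
      (hθmono.monotoneOn.monovaryOn hθ₀mono.monotoneOn),
    lintegral_edist_sq_withDensity_ofReal hfmeas hf0 hθmeas hθ₀meas hθmom hθ₀mom]

end Stmt16
end
end
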